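/- arXiv:2512.10567 — 2 statements merged into one kernel-verified Lean document; each statement's English description precedes it below -/
import Mathlib

section
/- Let n ≥ 1 and let q ∈ ℂ be nonzero and not a root of unity. Then the global dimension of the q-Heisenberg algebra 𝔥_n(q) is at most 3n: every left 𝔥_n(q)-module admits a projective resolution of length at most 3n. -/
noncomputable section

open scoped BigOperators

namespace QHeisenberg

/-- Index type for the `3n` generators: `x`-, `y`-, and `z`-variables. -/
abbrev GenIdx (n : ℕ) := Fin n ⊕ (Fin n ⊕ Fin n)

/-- The `x_i` generator in the free algebra. -/
def fX (n : ℕ) (i : Fin n) : FreeAlgebra ℂ (GenIdx n) := FreeAlgebra.ι ℂ (Sum.inl i)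

/-- The `y_i` generator in the free algebra. -/
def fY (n : ℕ) (i : Fin n) : FreeAlgebra ℂ (GenIdx n) := FreeAlgebra.ι ℂ (Sum.inr (Sum.inl i))

/-- The `z_i` generator in the free algebra. -/
def fZ (n : ℕ) (i : Fin n) : FreeAlgebra ℂ (GenIdx n) := FreeAlgebra.ι ℂ (Sum.inr (Sum.inr i))

/-- The defining relations of the q-Heisenberg algebra `𝔥_n(q)`. -/
inductive Rel (n : ℕ) (q : ℂ) :
    FreeAlgebra ℂ (GenIdx n) → FreeAlgebra ℂ (GenIdx n) → Prop
  | xx (i j : Fin n) : Rel n q (fX n i * fX n j) (fX n j * fX n i)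
  | yy (i j : Fin n) : Rel n q (fY n i * fY n j) (fY n j * fY n i)
  | zz (i j : Fin n) : Rel n q (fZ n i * fZ n j) (fZ n j * fZ n i)
  | xz (i : Fin n) : Rel n q (fX n i * fZ n i) (q • (fZ n i * fX n i))
  | yz (i : Fin n) : Rel n q (fY n i * fZ n i) (q⁻¹ • (fZ n i * fY n i))
  | xy (i : Fin n) : Rel n q (fX n i * fY n i) (q⁻¹ • (fY n i * fX n i) + fZ n i)
  | xyne (i j : Fin n) : i ≠ j → Rel n q (fX n i * fY n j) (fY n j * fX n i)
  | xzne (i j : Fin n) : i ≠ j → Rel n q (fX n i * fZ n j) (fZ n j * fX n i)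
  | yzne (i j : Fin n) : i ≠ j → Rel n q (fY n i * fZ n j) (fZ n j * fY n i)

/-- The q-Heisenberg algebra `𝔥_n(q)`. -/
abbrev H (n : ℕ) (q : ℂ) := RingQuot (Rel n q)

/-- The generator `x_i` of `𝔥_n(q)`. -/
def X (n : ℕ) (q : ℂ) (i : Fin n) : H n q := RingQuot.mkAlgHom ℂ (Rel n q) (fX n i)

/-- The generator `y_i` of `𝔥_n(q)`. -/
def Y (n : ℕ) (q : ℂ) (i : Fin n) : H n q := RingQuot.mkAlgHom ℂ (Rel n q) (fY n i)

/-- The generator `z_i` of `𝔥_n(q)`. -/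
def Z (n : ℕ) (q : ℂ) (i : Fin n) : H n q := RingQuot.mkAlgHom ℂ (Rel n q) (fZ n i)

/-- `q` is not a root of unity: `q ^ k ≠ 1` for every `k ≥ 1`. -/
def NotRootOfUnity (q : ℂ) : Prop := ∀ k : ℕ, 1 ≤ k → q ^ k ≠ 1

end QHeisenberg

section Helpers

open CategoryTheory CategoryTheory.Limits

universe v u


theorem spliceRes {C : Type u} [Category.{v} C] [Abelian C] {S : ShortComplex C} (hS : S.ShortExact)
    (hP : Projective S.X₂) (Q : ProjectiveResolution S.X₁) :
    ∃ P : ProjectiveResolution S.X₃, ∀ k, P.complex.X (k+1) = Q.complex.X k := by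
  have := hS.mono_f
  have := hS.epi_g
  obtain ⟨p, hp, hpe, hpx⟩ : ∃ (p : Q.complex.X 0 ⟶ S.X₁) (h : Q.complex.d 1 0 ≫ p = 0),
      Epi p ∧ (ShortComplex.mk _ p h).Exact :=
    ⟨Q.π.f 0, Q.complex_d_comp_π_f_zero, inferInstanceAs (Epi (Q.π.f 0)), Q.exact₀⟩
  have hw : Q.complex.d 1 0 ≫ (p ≫ S.f) = 0 := by
    rw [reassoc_of% hp, zero_comp]
  let K : ChainComplex C ℕ := ChainComplex.augment Q.complex (p ≫ S.f) hw
  have hK : K.d 1 0 ≫ S.g = 0 := by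
    change (p ≫ S.f) ≫ S.g = 0
    rw [Category.assoc, S.zero]; exact comp_zero
  have ex0 : (ShortComplex.mk (K.d 1 0) S.g hK).Exact := by
    let α : ShortComplex.mk (K.d 1 0) S.g hK ⟶ S :=
      { τ₁ := p
        τ₂ := 𝟙 _
        τ₃ := 𝟙 _
        comm₁₂ := (Category.comp_id _).symm
        comm₂₃ := (Category.id_comp _).trans (Category.comp_id _).symm }
    have h1 : Epi α.τ₁ := inferInstanceAs (Epi (p))
    have h2 : IsIso α.τ₂ := inferInstanceAs (IsIso (𝟙 S.X₂))
    have h3 : Mono α.τ₃ := inferInstanceAs (Mono (𝟙 S.X₃))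
    exact (ShortComplex.exact_iff_of_epi_of_isIso_of_mono α).2 hS.exact
  have exS : ∀ n, K.ExactAt (n+1) := by
    intro n
    rw [HomologicalComplex.exactAt_iff' _ (n + 1 + 1) (n + 1) n (by simp) (by simp)]
    match n with
    | 0 =>
      change (ShortComplex.mk (Q.complex.d 1 0) (p ≫ S.f) hw).Exact
      let α : ShortComplex.mk (Q.complex.d 1 0) (p) hp ⟶
          ShortComplex.mk (Q.complex.d 1 0) (p ≫ S.f) hw :=
        { τ₁ := 𝟙 _
          τ₂ := 𝟙 _
          τ₃ := S.f
          comm₁₂ := (Category.id_comp _).trans (Category.comp_id _).symm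
          comm₂₃ := (Category.id_comp _) }
      have h1 : Epi α.τ₁ := inferInstanceAs (Epi (𝟙 (Q.complex.X 1)))
      have h2 : IsIso α.τ₂ := inferInstanceAs (IsIso (𝟙 (Q.complex.X 0)))
      have h3 : Mono α.τ₃ := inferInstanceAs (Mono S.f)
      exact (ShortComplex.exact_iff_of_epi_of_isIso_of_mono α).1 hpx
    | n + 1 => exact Q.exact_succ n
  refine ⟨{ complex := K
            projective := ?_
            π := (ChainComplex.toSingle₀Equiv _ _).symm ⟨S.g, hK⟩
            quasiIso := ?_ }, fun k => rfl⟩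
  · rintro (_ | n)
    · exact hP
    · exact Q.projective n
  · refine ⟨fun n => ?_⟩
    cases n
    · rw [ChainComplex.quasiIsoAt₀_iff, ShortComplex.quasiIso_iff_of_zeros']
      · refine (ShortComplex.exact_and_epi_g_iff_of_iso ?_).2
          ⟨ex0, hS.epi_g⟩
        exact ShortComplex.isoMk (Iso.refl _) (Iso.refl _) (Iso.refl _)
          ((Category.id_comp _).trans (Category.comp_id _).symm)
          ((Category.id_comp _).trans ((Category.comp_id _).trans
           (ChainComplex.toSingle₀Equiv_symm_apply_f_zero (C := K) S.g hK)).symm)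
      all_goals rfl
    · rw [quasiIsoAt_iff_exactAt']
      · apply exS
      · apply ChainComplex.exactAt_succ_single_obj

theorem exists_res {C : Type u} [Category.{v} C] [Abelian C] [EnoughProjectives C] (d : ℕ) :
    ∀ (M : C), HasProjectiveDimensionLE M d → 
    ∃ P : ProjectiveResolution M, ∀ k : ℕ, d < k → Limits.IsZero (P.complex.X k) := by
  induction d with
  | zero =>
    intro M h
    have : Projective M := (projective_iff_hasProjectiveDimensionLE_zero M).2 h
    refine ⟨ProjectiveResolution.self M, fun k hk => ?_⟩
    apply HomologicalComplex.isZero_single_obj_X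
    simp; omega
  | succ d ih =>
    intro M h
    let S : ShortComplex C := ShortComplex.mk (kernel.ι (Projective.π M)) (Projective.π M) (by simp)
    have hS : S.ShortExact :=
      { exact := ShortComplex.exact_kernel _
        mono_f := inferInstanceAs (Mono (kernel.ι (Projective.π M)))
        epi_g := inferInstanceAs (Epi (Projective.π M)) }
    have hP : Projective S.X₂ := Projective.projective_over M
    have := (hS.hasProjectiveDimensionLT_X₃_iff d hP).1 h
    obtain ⟨Q, hQ⟩ := ih S.X₁ this
    obtain ⟨P, hP'⟩ := spliceRes hS hP Q
    refine ⟨P, fun k hk => ?_⟩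
    obtain ⟨k, rfl⟩ : ∃ j, k = j + 1 := ⟨k-1, by omega⟩
    rw [hP']
    exact hQ k (by omega)



/-- Ore extension data -/
structure OreData (A B : Type) [Ring A] [Ring B] [Algebra ℂ A] [Algebra ℂ B] where
  f : A →ₐ[ℂ] B
  t : B
  σ : A →ₐ[ℂ] A
  δ : A →ₗ[ℂ] A
  δ_mul : ∀ a b, δ (a * b) = δ a * σ b + a * δ b
  comm : ∀ a, f a * t = t * f (σ a) + f (δ a)
  gen : Algebra.adjoin ℂ (insert t (Set.range f)) = ⊤
  univ : ∀ {E : Type v} [Ring E] [Algebra ℂ E] (g : A →ₐ[ℂ] E) (T : E),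
    (∀ a, g a * T = T * g (σ a) + g (δ a)) → ∃ h : B →ₐ[ℂ] E, (∀ a, h (f a) = g a) ∧ h t = T

namespace OreData

variable {A B : Type} [Ring A] [Ring B] [Algebra ℂ A] [Algebra ℂ B] (D : OreData.{v} A B)

section act
variable (M : Type v) [AddCommGroup M] [Module ℂ M] [Module A M] [IsScalarTower ℂ A M]

/-- shift -/
noncomputable def shift : Module.End ℂ (ℕ →₀ M) := Finsupp.lmapDomain M ℂ Nat.succ

theorem shift_single (i : ℕ) (m : M) :
    shift M (Finsupp.single i m) = Finsupp.single (i+1) m := by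
  simp [shift, Finsupp.lmapDomain]

/-- aux -/
noncomputable def rhoAux : ℕ → A →ₗ[ℂ] (M →ₗ[ℂ] (ℕ →₀ M))
  | 0 => (LinearMap.llcomp ℂ M M (ℕ →₀ M) (Finsupp.lsingle 0)).comp (Algebra.lsmul ℂ ℂ M).toLinearMap
  | i + 1 => (LinearMap.llcomp ℂ M (ℕ →₀ M) (ℕ →₀ M) (shift M)).comp ((rhoAux i).comp D.σ.toLinearMap)
      + (rhoAux i).comp D.δ

theorem rhoAux_zero (a : A) (m : M) : D.rhoAux M 0 a m = Finsupp.single 0 (a • m) := by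
  simp [rhoAux]

theorem rhoAux_succ (i : ℕ) (a : A) (m : M) :
    D.rhoAux M (i+1) a m = shift M (D.rhoAux M i (D.σ a) m) + D.rhoAux M i (D.δ a) m := by
  simp [rhoAux]

/-- rho -/
noncomputable def rho : A →ₗ[ℂ] Module.End ℂ (ℕ →₀ M) where
  toFun a := Finsupp.lsum ℂ (fun i => D.rhoAux M i a)
  map_add' a b := by ext i m; simp
  map_smul' c a := by ext i m; simp

theorem rho_single (i : ℕ) (a : A) (m : M) :
    D.rho M a (Finsupp.single i m) = D.rhoAux M i a m := by
  simp [rho]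

theorem rho_shift (a : A) :
    D.rho M a * shift M = shift M * D.rho M (D.σ a) + D.rho M (D.δ a) := by
  apply Finsupp.lhom_ext
  intro i m
  simp only [Module.End.mul_apply, LinearMap.add_apply, shift_single, rho_single, rhoAux_succ]

theorem δ_one : D.δ 1 = 0 := by
  have := D.δ_mul 1 1
  simpa using this

theorem rho_one : D.rho M 1 = 1 := by
  apply Finsupp.lhom_ext
  intro i m
  rw [rho_single, Module.End.one_apply]
  induction i with
  | zero => simp [rhoAux_zero]
  | succ i ih => rw [rhoAux_succ, map_one, ih, δ_one, map_zero, shift_single]; simp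

theorem rho_mul (a b : A) : D.rho M (a * b) = D.rho M a * D.rho M b := by
  apply Finsupp.lhom_ext
  intro i m
  rw [Module.End.mul_apply]
  induction i generalizing a b with
  | zero => simp only [rho_single, rhoAux_zero, mul_smul]
  | succ i ih =>
    have h := fun c => congrArg (fun F => F (Finsupp.single i m)) (D.rho_shift M c)
    simp only [Module.End.mul_apply, LinearMap.add_apply, shift_single] at h
    have h2 := fun c x => congrArg (fun F => F x) (D.rho_shift M c)
    simp only [Module.End.mul_apply, LinearMap.add_apply] at h2
    rw [h, h b, map_add, h2, map_mul, ih, D.δ_mul, map_add, LinearMap.add_apply, ih, ih]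
    abel

end act

theorem exists_act (M : Type v) [AddCommGroup M] [Module A M] :
    ∃ h : B →+* AddMonoid.End (ℕ →₀ M),
      (∀ i m, h D.t (Finsupp.single i m) = Finsupp.single (i+1) m) ∧
      (∀ a m, h (D.f a) (Finsupp.single 0 m) = Finsupp.single 0 (a • m)) := by
  let _ : Module ℂ M := Module.compHom M (algebraMap ℂ A)
  have : IsScalarTower ℂ A M := ⟨fun c a m => by
    change (c • a) • m = algebraMap ℂ A c • a • m
    rw [Algebra.smul_def, mul_smul]⟩
  obtain ⟨h, h1, h2⟩ := D.univ (AlgHom.ofLinearMap (D.rho M) (D.rho_one M) (D.rho_mul M)) (shift M)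
    (D.rho_shift M)
  let F : Module.End ℂ (ℕ →₀ M) →+* AddMonoid.End (ℕ →₀ M) :=
    { toFun := fun φ => φ.toAddMonoidHom
      map_one' := rfl
      map_mul' := fun _ _ => rfl
      map_zero' := rfl
      map_add' := fun _ _ => rfl }
  refine ⟨F.comp h.toRingHom, fun i m => ?_, fun a m => ?_⟩
  · change h D.t _ = _
    rw [h2, shift_single]
  · change h (D.f a) _ = _
    rw [h1]
    change D.rho M a _ = _
    rw [rho_single, rhoAux_zero]

/-- The induced module. -/
def Ind (_D : OreData.{v} A B) (M : Type v) [AddCommGroup M] [Module A M] : Type v := ℕ →₀ M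

section Ind
variable (M : Type v) [AddCommGroup M] [Module A M]
noncomputable instance : AddCommGroup (D.Ind M) := inferInstanceAs (AddCommGroup (ℕ →₀ M))

/-- action -/
noncomputable def act : B →+* AddMonoid.End (D.Ind M) := (D.exists_act M).choose

noncomputable instance : Module B (D.Ind M) := Module.compHom (D.Ind M) (D.act M)

/-- single -/
noncomputable def sg (i : ℕ) : M →+ D.Ind M := Finsupp.singleAddHom i

/-- coefficient -/
noncomputable def cf (i : ℕ) : D.Ind M →+ M := Finsupp.applyAddHom i

variable {M}
theorem t_smul (i : ℕ) (m : M) : D.t • D.sg M i m = D.sg M (i+1) m :=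
  (D.exists_act M).choose_spec.1 i m

theorem f_smul (a : A) (m : M) : D.f a • D.sg M 0 m = D.sg M 0 (a • m) :=
  (D.exists_act M).choose_spec.2 a m

theorem cf_sg (i j : ℕ) (m : M) : D.cf M j (D.sg M i m) = if i = j then m else 0 :=
  Finsupp.single_apply

theorem ind_ext {x y : D.Ind M} (h : ∀ i, D.cf M i x = D.cf M i y) : x = y := Finsupp.ext h

theorem cf_bound (x : D.Ind M) : ∃ N, ∀ i, N ≤ i → D.cf M i x = 0 := by
  refine ⟨x.support.sup id + 1, fun i hi => ?_⟩
  change x.toFun i = 0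
  by_contra h
  have := Finset.le_sup (f := id) (Finsupp.mem_support_iff.2 h)
  simp at this
  omega

theorem ind_sum (x : D.Ind M) : ∃ s : Finset ℕ, x = ∑ i ∈ s, D.sg M i (D.cf M i x) :=
  ⟨x.support, (Finsupp.sum_single x).symm⟩

theorem ind_hom_ext {N : Type*} [AddCommMonoid N] {φ ψ : D.Ind M →+ N}
    (h : ∀ i m, φ (D.sg M i m) = ψ (D.sg M i m)) : φ = ψ :=
  Finsupp.addHom_ext h

/-- lift, additive -/
noncomputable def liftAdd {N : Type*} [AddCommGroup N] [Module B N] (φ : M →+ N) : D.Ind M →+ N :=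
  Finsupp.liftAddHom (fun i => (DistribSMul.toAddMonoidHom N (D.t ^ i)).comp φ)

theorem liftAdd_sg {N : Type*} [AddCommGroup N] [Module B N] (φ : M →+ N) (i : ℕ) (m : M) :
    D.liftAdd φ (D.sg M i m) = D.t ^ i • φ m := by
  change Finsupp.liftAddHom _ (Finsupp.single i m) = _
  rw [Finsupp.liftAddHom_apply_single]; rfl

theorem liftAdd_smul {N : Type*} [AddCommGroup N] [Module B N] (φ : M →+ N)
    (hφ : ∀ a m, φ (a • m) = D.f a • φ m) (b : B) :
    ∀ x : D.Ind M, D.liftAdd φ (b • x) = b • D.liftAdd φ x := by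
  have hb : b ∈ Algebra.adjoin ℂ (insert D.t (Set.range D.f)) := by rw [D.gen]; trivial
  have ht : ∀ x : D.Ind M, D.liftAdd φ (D.t • x) = D.t • D.liftAdd φ x := by
    have : (D.liftAdd φ).comp (DistribSMul.toAddMonoidHom _ D.t) =
        (DistribSMul.toAddMonoidHom _ D.t).comp (D.liftAdd φ) := by
      apply D.ind_hom_ext
      intro i m
      simp only [AddMonoidHom.comp_apply, DistribSMul.toAddMonoidHom_apply, t_smul, liftAdd_sg,
        pow_succ', mul_smul]
    exact fun x => congrArg (fun F => F x) this
  have hf : ∀ a, ∀ x : D.Ind M, D.liftAdd φ (D.f a • x) = D.f a • D.liftAdd φ x := by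
    have : ∀ i m a, D.liftAdd φ (D.f a • D.sg M i m) = D.f a • D.liftAdd φ (D.sg M i m) := by
      intro i m
      induction i with
      | zero => intro a; rw [f_smul, liftAdd_sg, liftAdd_sg, pow_zero, one_smul, one_smul, hφ]
      | succ i ih =>
        intro a
        rw [← t_smul, ht, ← mul_smul, ← mul_smul, D.comm, add_smul, add_smul, mul_smul, map_add, ht,
          ih, ih, mul_smul]
    intro a
    have : (D.liftAdd φ).comp (DistribSMul.toAddMonoidHom _ (D.f a)) =
        (DistribSMul.toAddMonoidHom _ (D.f a)).comp (D.liftAdd φ) := by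
      apply D.ind_hom_ext
      intro i m
      exact this i m a
    exact fun x => congrArg (fun F => F x) this
  induction hb using Algebra.adjoin_induction with
  | mem b hb =>
    rcases hb with rfl | ⟨a, rfl⟩
    · exact ht
    · exact hf a
  | algebraMap r => rw [← D.f.commutes r]; exact hf _
  | add b c _ _ h1 h2 => intro x; rw [add_smul, add_smul, map_add, h1, h2]
  | mul b c _ _ h1 h2 => intro x; rw [mul_smul, mul_smul, h1, h2]

/-- lift -/
noncomputable def lift {N : Type*} [AddCommGroup N] [Module B N] (φ : M →+ N)
    (hφ : ∀ a m, φ (a • m) = D.f a • φ m) : D.Ind M →ₗ[B] N :=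
  { D.liftAdd φ with map_smul' := D.liftAdd_smul φ hφ }

theorem lift_sg {N : Type*} [AddCommGroup N] [Module B N] (φ : M →+ N)
    (hφ : ∀ a m, φ (a • m) = D.f a • φ m) (i : ℕ) (m : M) :
    D.lift φ hφ (D.sg M i m) = D.t ^ i • φ m := D.liftAdd_sg φ i m

theorem tpow_smul (i j : ℕ) (m : M) : D.t ^ i • D.sg M j m = D.sg M (j + i) m := by
  induction i with
  | zero => simp
  | succ i ih => rw [pow_succ', mul_smul, ih, t_smul]; rfl

theorem lin_ext {N : Type*} [AddCommGroup N] [Module B N] {φ ψ : D.Ind M →ₗ[B] N}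
    (h : ∀ m, φ (D.sg M 0 m) = ψ (D.sg M 0 m)) : φ = ψ := by
  have : φ.toAddMonoidHom = ψ.toAddMonoidHom := by
    apply D.ind_hom_ext
    intro i m
    have := D.tpow_smul i 0 m
    rw [zero_add] at this
    rw [← this]
    change φ _ = ψ _
    rw [map_smul, map_smul, h]
  ext x
  exact congrArg (fun F => F x) this

/-- functoriality -/
noncomputable def map {N : Type v} [AddCommGroup N] [Module A N] (φ : M →ₗ[A] N) :
    D.Ind M →ₗ[B] D.Ind N :=
  D.lift ((D.sg N 0).comp φ.toAddMonoidHom) (fun a m => by simp [f_smul])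

theorem map_sg {N : Type v} [AddCommGroup N] [Module A N] (φ : M →ₗ[A] N) (i : ℕ) (m : M) :
    D.map φ (D.sg M i m) = D.sg N i (φ m) := by
  rw [map, lift_sg]
  simp [tpow_smul]

theorem cf_map {N : Type v} [AddCommGroup N] [Module A N] (φ : M →ₗ[A] N) (x : D.Ind M) (i : ℕ) :
    D.cf N i (D.map φ x) = φ (D.cf M i x) := by
  have : (D.cf N i).comp (D.map φ).toAddMonoidHom = φ.toAddMonoidHom.comp (D.cf M i) := by
    apply D.ind_hom_ext
    intro j m
    simp [map_sg, cf_sg]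
    split_ifs <;> simp
  exact congrArg (fun F => F x) this

theorem mem_range_map {N : Type v} [AddCommGroup N] [Module A N] (φ : M →ₗ[A] N) (y : D.Ind N)
    (hy : ∀ i, D.cf N i y ∈ Set.range φ) : y ∈ Set.range (D.map φ) := by
  obtain ⟨s, hs⟩ := D.ind_sum y
  choose g hg using hy
  refine ⟨∑ i ∈ s, D.sg M i (g i), ?_⟩
  rw [map_sum, hs]
  refine Finset.sum_congr rfl fun i _ => ?_
  rw [map_sg, hg]

theorem map_injective {N : Type v} [AddCommGroup N] [Module A N] (φ : M →ₗ[A] N)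
    (h : Function.Injective φ) : Function.Injective (D.map φ) := fun x y hxy =>
  D.ind_ext fun i => h (by rw [← cf_map, ← cf_map, hxy])

theorem map_surjective {N : Type v} [AddCommGroup N] [Module A N] (φ : M →ₗ[A] N)
    (h : Function.Surjective φ) : Function.Surjective (D.map φ) := fun y =>
  D.mem_range_map φ y fun _ => h _

theorem map_exact {N P : Type v} [AddCommGroup N] [Module A N] [AddCommGroup P] [Module A P]
    (φ : M →ₗ[A] N) (ψ : N →ₗ[A] P)
    (h : Function.Exact φ ψ) : Function.Exact (D.map φ) (D.map ψ) := by
  intro y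
  constructor
  · intro hy
    refine D.mem_range_map φ y fun i => (h _).1 ?_
    rw [← cf_map, hy, map_zero]
  · rintro ⟨x, rfl⟩
    apply D.ind_ext
    intro i
    rw [cf_map, cf_map, map_zero, h.apply_apply_eq_zero]

end Ind


section Homological

theorem shortExact_mk {R : Type} [Ring R] {X Y Z : Type v} [AddCommGroup X] [AddCommGroup Y]
    [AddCommGroup Z] [Module R X] [Module R Y] [Module R Z] (φ : X →ₗ[R] Y) (ψ : Y →ₗ[R] Z)
    (h1 : Function.Injective φ) (h2 : Function.Exact φ ψ) (h3 : Function.Surjective ψ) :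
    (ShortComplex.mk (ModuleCat.ofHom φ) (ModuleCat.ofHom ψ)
      (by ext x; exact h2.apply_apply_eq_zero x)).ShortExact :=
  ModuleCat.shortComplex_shortExact _ h2 h1 h3

theorem ind_projective (M : Type v) [AddCommGroup M] [Module A M] [Module.Projective A M] :
    Projective (ModuleCat.of B (D.Ind M)) := by
  refine ⟨fun {E X} φ e he => ?_⟩
  have hs := (ModuleCat.epi_iff_surjective _).mp he
  let _ : Module A E := Module.compHom E D.f.toRingHom
  let _ : Module A X := Module.compHom X D.f.toRingHom
  let e' : E →ₗ[A] X :=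
    { toFun := e.hom
      map_add' := map_add _
      map_smul' := fun a x => e.hom.map_smul (D.f a) x }
  let φ' : M →ₗ[A] X :=
    { toFun := fun m => φ.hom (D.sg M 0 m)
      map_add' := fun x y => by rw [map_add, map_add]
      map_smul' := fun a x => by
        rw [← f_smul]
        exact φ.hom.map_smul (D.f a) _ }
  obtain ⟨l, hl⟩ := Module.projective_lifting_property e' φ' hs
  refine ⟨ModuleCat.ofHom (D.lift l.toAddMonoidHom (fun a m => l.map_smul a m)), ?_⟩
  ext1
  apply D.lin_ext
  intro m
  have h0 := D.lift_sg l.toAddMonoidHom (fun a m => l.map_smul a m) 0 m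
  rw [pow_zero, one_smul] at h0
  refine (congrArg e.hom h0).trans ?_
  exact congrArg (fun F => F m) hl

theorem ind_pd (d : ℕ) : ∀ (M : ModuleCat.{v} A), HasProjectiveDimensionLE M d →
    HasProjectiveDimensionLE (ModuleCat.of B (D.Ind M)) d := by
  induction d with
  | zero =>
    intro M h
    have : Projective M := (projective_iff_hasProjectiveDimensionLE_zero M).2 h
    have : Module.Projective A M := inferInstance
    exact (projective_iff_hasProjectiveDimensionLE_zero _).1 (D.ind_projective M)
  | succ d ih =>
    intro M h
    let S := M.projectiveShortComplex
    have hS : S.ShortExact := M.shortExact_projectiveShortComplex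
    have hK : HasProjectiveDimensionLE S.X₁ d :=
      (hS.hasProjectiveDimensionLT_X₃_iff d inferInstance).mp h
    have hT := shortExact_mk (D.map S.f.hom) (D.map S.g.hom)
      (D.map_injective _ hS.moduleCat_injective_f)
      (D.map_exact _ _ ((ShortComplex.ShortExact.moduleCat_exact_iff_function_exact _).1 hS.exact))
      (D.map_surjective _ hS.moduleCat_surjective_g)
    have : Projective (ModuleCat.of B (D.Ind S.X₂)) := D.ind_projective _
    exact (hT.hasProjectiveDimensionLT_X₃_iff d this).mpr (ih _ hK)

section seq
variable {M₀ M₁ M₂ : Type v} [AddCommGroup M₀] [AddCommGroup M₁] [AddCommGroup M₂]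
  [Module B M₀] [Module A M₁] [Module A M₂] (e₁ : M₁ ≃+ M₀) (e₂ : M₂ ≃+ M₀)

/-- tau -/
def tau : M₂ →+ M₁ :=
  e₁.symm.toAddMonoidHom.comp ((DistribSMul.toAddMonoidHom M₀ D.t).comp e₂.toAddMonoidHom)

theorem tau_apply (m : M₂) : D.tau e₁ e₂ m = e₁.symm (D.t • e₂ m) := rfl

/-- the map `t ⊗ m - 1 ⊗ t m` -/
noncomputable def kos : M₂ →+ D.Ind M₁ :=
  (D.sg M₁ 1).comp (e₂.trans e₁.symm).toAddMonoidHom - (D.sg M₁ 0).comp (D.tau e₁ e₂)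

theorem kos_apply (m : M₂) :
    D.kos e₁ e₂ m = D.sg M₁ 1 (e₁.symm (e₂ m)) - D.sg M₁ 0 (D.tau e₁ e₂ m) := rfl

theorem kos_smul (h₁ : ∀ a m, e₁ (a • m) = D.f a • e₁ m) (h₂ : ∀ a m, e₂ (a • m) = D.f (D.σ a) • e₂ m)
    (a : A) (m : M₂) : D.kos e₁ e₂ (a • m) = D.f a • D.kos e₁ e₂ m := by
  have h₁' : ∀ a m, e₁.symm (D.f a • m) = a • e₁.symm m := fun a m => by
    apply e₁.injective; rw [h₁]; simp
  have key : D.f a • D.sg M₁ 1 (e₁.symm (e₂ m)) =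
      D.sg M₁ 1 (D.σ a • e₁.symm (e₂ m)) + D.sg M₁ 0 (D.δ a • e₁.symm (e₂ m)) := by
    rw [show (1 : ℕ) = 0 + 1 from rfl, ← t_smul, ← t_smul, ← mul_smul, D.comm, add_smul, mul_smul,
      f_smul, f_smul]
  have key2 : D.tau e₁ e₂ (a • m) = a • D.tau e₁ e₂ m - D.δ a • e₁.symm (e₂ m) := by
    rw [tau_apply, tau_apply, ← h₁', ← h₁', h₂, ← mul_smul, ← mul_smul, D.comm, add_smul, map_add]
    abel
  rw [kos_apply, kos_apply, smul_sub, key, f_smul, key2, h₂, h₁', map_sub]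
  abel

theorem seq_shortExact
    (h₁ : ∀ a m, e₁ (a • m) = D.f a • e₁ m) (h₂ : ∀ a m, e₂ (a • m) = D.f (D.σ a) • e₂ m) :
    ∃ (φ : D.Ind M₂ →ₗ[B] D.Ind M₁) (ψ : D.Ind M₁ →ₗ[B] M₀),
    Function.Injective φ ∧ Function.Exact φ ψ ∧ Function.Surjective ψ := by
  let φ := D.lift (D.kos e₁ e₂) (D.kos_smul e₁ e₂ h₁ h₂)
  let ψ := D.lift e₁.toAddMonoidHom h₁
  have hφ : ∀ i m, φ (D.sg M₂ i m) = D.sg M₁ (i+1) (e₁.symm (e₂ m)) - D.sg M₁ i (D.tau e₁ e₂ m) := by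
    intro i m
    rw [lift_sg, kos_apply, smul_sub, tpow_smul, tpow_smul, zero_add, add_comm]
  have hψ : ∀ i m, ψ (D.sg M₁ i m) = D.t ^ i • e₁ m := fun i m => D.lift_sg _ _ i m
  have hcf : ∀ i x, D.cf M₁ (i+1) (φ x) = 
      e₁.symm (e₂ (D.cf M₂ i x)) - D.tau e₁ e₂ (D.cf M₂ (i+1) x) := by
    intro i x
    have : (D.cf M₁ (i+1)).comp φ.toAddMonoidHom =
       (e₂.trans e₁.symm).toAddMonoidHom.comp (D.cf M₂ i) - (D.tau e₁ e₂).comp (D.cf M₂ (i+1)) := by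
      apply D.ind_hom_ext
      intro j m
      change D.cf M₁ (i+1) (φ (D.sg M₂ j m)) = e₁.symm (e₂ (D.cf M₂ i (D.sg M₂ j m))) - 
        D.tau e₁ e₂ (D.cf M₂ (i+1) (D.sg M₂ j m))
      rw [hφ, map_sub, cf_sg, cf_sg, cf_sg, cf_sg]
      congr 1
      · by_cases h : j = i <;> simp [h]
      · by_cases h : j = i + 1 <;> simp [h]
    exact congrArg (fun F => F x) this
  refine ⟨φ, ψ, ?_, ?_, ?_⟩
  · rw [injective_iff_map_eq_zero]
    intro x hx
    obtain ⟨N, hN⟩ := D.cf_bound x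
    have step : ∀ i, D.cf M₂ (i+1) x = 0 → D.cf M₂ i x = 0 := by
      intro i hi
      have := hcf i x
      rw [hx, hi] at this
      simpa using this.symm
    have all : ∀ k i, N ≤ i + k → D.cf M₂ i x = 0 := by
      intro k
      induction k with
      | zero => intro i hi; exact hN i hi
      | succ k ih => intro i hi; exact step i (ih (i+1) (by omega))
    apply D.ind_ext
    intro i
    rw [all N i (by omega), map_zero]
  · have hz : ∀ x, ψ (φ x) = 0 := by
      intro x
      have : (ψ.comp φ).toAddMonoidHom = 0 := by
        apply D.ind_hom_ext
        intro j m
        change ψ (φ (D.sg M₂ j m)) = 0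
        rw [hφ, map_sub, hψ, hψ, tau_apply]
        simp [pow_succ, mul_smul]
      exact congrArg (fun F => F x) this
    have hs : ∀ i m, ∃ x m', D.sg M₁ i m = φ x + D.sg M₁ 0 m' := by
      intro i
      induction i with
      | zero => intro m; exact ⟨0, m, by simp⟩
      | succ i ih =>
        intro m
        obtain ⟨x, m', h⟩ := ih (D.tau e₁ e₂ (e₂.symm (e₁ m)))
        refine ⟨D.sg M₂ i (e₂.symm (e₁ m)) + x, m', ?_⟩
        rw [map_add, add_assoc, ← h, hφ]
        simp
    have hy : ∀ y, ∃ x m', y = φ x + D.sg M₁ 0 m' := by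
      intro y
      choose X m' h using hs
      obtain ⟨s, hs⟩ := D.ind_sum y
      refine ⟨∑ i ∈ s, X i (D.cf M₁ i y), ∑ i ∈ s, m' i (D.cf M₁ i y), ?_⟩
      rw [map_sum, map_sum, ← Finset.sum_add_distrib]
      conv_lhs => rw [hs]
      exact Finset.sum_congr rfl fun i _ => h _ _
    intro y
    constructor
    · intro h
      obtain ⟨x, m, rfl⟩ := hy y
      rw [map_add, hz, zero_add, hψ, pow_zero, one_smul] at h
      have : m = 0 := by simpa using h
      exact ⟨x, by rw [this, map_zero, add_zero]⟩
    · rintro ⟨x, rfl⟩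
      exact hz x
  · intro m
    exact ⟨D.sg M₁ 0 (e₁.symm m), by rw [hψ]; simp⟩

end seq

theorem gldim_step (D : OreData.{v} A B) (d : ℕ) (hA : ∀ M : ModuleCat.{v} A, HasProjectiveDimensionLE M d)
    (M : ModuleCat.{v} B) : HasProjectiveDimensionLE M (d+1) := by
  let M₁ := (ModuleCat.restrictScalars D.f.toRingHom).obj M
  let M₂ := (ModuleCat.restrictScalars (D.f.comp D.σ).toRingHom).obj M
  let e₁ : M₁ ≃+ M := AddEquiv.refl M
  let e₂ : M₂ ≃+ M := AddEquiv.refl M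
  obtain ⟨φ, ψ, h1, h2, h3⟩ := D.seq_shortExact e₁ e₂ (fun _ _ => rfl) (fun _ _ => rfl)
  have hT := shortExact_mk φ ψ h1 h2 h3
  have p1 := D.ind_pd d M₁ (hA _)
  have p2 := D.ind_pd d M₂ (hA _)
  exact hT.hasProjectiveDimensionLT_X₃ (d+1) p2 
    (hasProjectiveDimensionLT_of_ge _ (d+1) (d+2) (by omega))

end Homological

end OreData

namespace Tower

/-- commutation scalars -/
noncomputable def w (q : ℂ) (h g : ℕ) : ℂ :=
  if h / 3 = g / 3 then (if h % 3 = 1 then q else if g % 3 = 0 then q⁻¹ else q) else 1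

/-- coefficients of the lower terms -/
noncomputable def dd (q : ℂ) (h g : ℕ) : ℂ := if h = g + 1 ∧ g % 3 = 1 then -q else 0

/-- A family of elements satisfying the relations of the first `k` generators. -/
structure Sat (q : ℂ) (k : ℕ) {E : Type*} [Ring E] [Algebra ℂ E] (φ : ℕ → E) : Prop where
  zero : ∀ g, k ≤ g → φ g = 0
  comm : ∀ g h, g < h → h < k → φ g * φ h = w q h g • (φ h * φ g) + dd q h g • φ (g - 1)

/-- relations -/
inductive TRel (q : ℂ) (k : ℕ) : FreeAlgebra ℂ ℕ → FreeAlgebra ℂ ℕ → Prop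
  | zero (g : ℕ) : k ≤ g → TRel q k (FreeAlgebra.ι ℂ g) 0
  | comm (g h : ℕ) : g < h → h < k → TRel q k (FreeAlgebra.ι ℂ g * FreeAlgebra.ι ℂ h)
      (w q h g • (FreeAlgebra.ι ℂ h * FreeAlgebra.ι ℂ g) + dd q h g • FreeAlgebra.ι ℂ (g - 1))

/-- algebra on the first `k` generators -/
abbrev Alg (q : ℂ) (k : ℕ) : Type := RingQuot (TRel q k)

/-- generators -/
noncomputable def gen (q : ℂ) (k : ℕ) (g : ℕ) : Alg q k :=
  RingQuot.mkAlgHom ℂ (TRel q k) (FreeAlgebra.ι ℂ g)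

theorem gen_sat (q : ℂ) (k : ℕ) : Sat q k (gen q k) where
  zero g h := by
    have := RingQuot.mkAlgHom_rel ℂ (TRel.zero (q := q) g h)
    simpa [gen] using this
  comm g h h1 h2 := by
    have := RingQuot.mkAlgHom_rel ℂ (TRel.comm (q := q) g h h1 h2)
    simpa [gen] using this

section
variable {q : ℂ} {k : ℕ} {E : Type*} [Ring E] [Algebra ℂ E]

/-- universal property -/
noncomputable def lift {φ : ℕ → E} (hφ : Sat q k φ) : Alg q k →ₐ[ℂ] E :=
  RingQuot.liftAlgHom ℂ ⟨FreeAlgebra.lift ℂ φ, by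
    intro x y h
    cases h with
    | zero g h => simpa using hφ.zero g h
    | comm g h h1 h2 => simpa using hφ.comm g h h1 h2⟩

theorem lift_gen {φ : ℕ → E} (hφ : Sat q k φ) (g : ℕ) : lift hφ (gen q k g) = φ g := by
  simp [lift, gen]

theorem alg_ext {φ ψ : Alg q k →ₐ[ℂ] E} (h : ∀ g, g < k → φ (gen q k g) = ψ (gen q k g)) :
    φ = ψ := by
  apply RingQuot.ringQuot_ext'
  ext g
  by_cases hg : g < k
  · exact h g hg
  · have := (gen_sat q k).zero g (by omega)
    change φ (gen q k g) = ψ (gen q k g)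
    rw [this, map_zero, map_zero]

theorem alg_induction {P : Alg q k → Prop} (hr : ∀ r, P (algebraMap ℂ _ r))
    (hg : ∀ g, g < k → P (gen q k g)) (ha : ∀ a b, P a → P b → P (a + b))
    (hm : ∀ a b, P a → P b → P (a * b)) (a : Alg q k) : P a := by
  obtain ⟨x, rfl⟩ := RingQuot.mkAlgHom_surjective ℂ (TRel q k) a
  induction x using FreeAlgebra.induction with
  | grade0 r => rw [AlgHom.commutes]; exact hr r
  | grade1 g =>
    by_cases h : g < k
    · exact hg g h
    · have := (gen_sat q k).zero g (by omega)
      change P (gen q k g)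
      rw [this, ← map_zero (algebraMap ℂ _)]
      exact hr 0
  | mul a b h1 h2 => rw [map_mul]; exact hm _ _ h1 h2
  | add a b h1 h2 => rw [map_add]; exact ha _ _ h1 h2
end

theorem sigma_sat (q : ℂ) (k : ℕ) : Sat q k (fun g => w q k g • gen q k g) where
  zero g h := by rw [(gen_sat q k).zero g h, smul_zero]
  comm g h h1 h2 := by
    simp only [smul_mul_smul_comm, (gen_sat q k).comm g h h1 h2]
    by_cases hd : h = g + 1 ∧ g % 3 = 1
    · have e1 : w q k g = 1 := by unfold w; rw [if_neg (by omega)]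
      have e2 : w q k h = 1 := by unfold w; rw [if_neg (by omega)]
      have e3 : w q k (g - 1) = 1 := by unfold w; rw [if_neg (by omega)]
      simp [e1, e2, e3]
    · have : dd q h g = 0 := by unfold dd; rw [if_neg hd]
      rw [this, zero_smul, zero_smul, add_zero, add_zero, smul_smul, smul_smul]
      congr 1
      ring

/-- sigma -/
noncomputable def sigma (q : ℂ) (k : ℕ) : Alg q k →ₐ[ℂ] Alg q k := lift (sigma_sat q k)

/-- matrices encoding sigma and delta -/
noncomputable def mat (q : ℂ) (k g : ℕ) : Matrix (Fin 2) (Fin 2) (Alg q k) :=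
  !![gen q k g, dd q k g • gen q k (g - 1); 0, w q k g • gen q k g]

theorem mat_sat (q : ℂ) (hq : q ≠ 0) (k : ℕ) : Sat q k (mat q k) where
  zero g h := by
    have : dd q k g = 0 := by unfold dd; rw [if_neg (by omega)]
    unfold mat
    rw [(gen_sat q k).zero g h, this]
    ext i j
    fin_cases i <;> fin_cases j <;> simp
  comm g h h1 h2 := by
    have d1 : dd q k g = 0 := by unfold dd; rw [if_neg (by omega)]
    have d2 : dd q k (g - 1) = 0 := by unfold dd; rw [if_neg (by omega)]
    have s := (sigma_sat q k).comm g h h1 h2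
    have r := (gen_sat q k).comm g h h1 h2
    have key : gen q k g * dd q k h • gen q k (h - 1) =
        w q h g • (dd q k h • gen q k (h - 1) * w q k g • gen q k g) := by
      by_cases hd : k = h + 1 ∧ h % 3 = 1
      · suffices H : gen q k g * gen q k (h - 1) =
            (w q h g * w q k g) • (gen q k (h - 1) * gen q k g) by
          rw [mul_smul_comm, H, smul_mul_smul_comm, smul_smul, smul_smul]
          congr 1
          ring
        by_cases hg : g = h - 1
        · have e1 : w q h g = q := by
            unfold w; rw [if_pos (by omega), if_pos (by omega)]
          have e2 : w q k g = q⁻¹ := by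
            unfold w; rw [if_pos (by omega), if_neg (by omega), if_pos (by omega)]
          rw [e1, e2, mul_inv_cancel₀ hq, one_smul, hg]
        · have e1 : w q h g = 1 := by unfold w; rw [if_neg (by omega)]
          have e2 : w q k g = 1 := by unfold w; rw [if_neg (by omega)]
          have e3 : w q (h - 1) g = 1 := by unfold w; rw [if_neg (by omega)]
          have e4 : dd q (h - 1) g = 0 := by unfold dd; rw [if_neg (by omega)]
          rw [(gen_sat q k).comm g (h - 1) (by omega) (by omega), e1, e2, e3, e4]
          simp
      · have : dd q k h = 0 := by unfold dd; rw [if_neg hd]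
        simp [this]
    unfold mat
    rw [d1, d2, Matrix.mul_fin_two, Matrix.mul_fin_two]
    ext i j
    fin_cases i <;> fin_cases j
    · simpa using r
    · simpa using key
    · simp
    · simpa using s

/-- Phi -/
noncomputable def Phi (q : ℂ) (hq : q ≠ 0) (k : ℕ) :
    Alg q k →ₐ[ℂ] Matrix (Fin 2) (Fin 2) (Alg q k) := lift (mat_sat q hq k)

theorem Phi_gen (q : ℂ) (hq : q ≠ 0) (k g : ℕ) : Phi q hq k (gen q k g) = mat q k g := lift_gen _ _
theorem sigma_gen (q : ℂ) (k g : ℕ) : sigma q k (gen q k g) = w q k g • gen q k g := lift_gen _ _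

theorem Phi_entries (q : ℂ) (hq : q ≠ 0) (k : ℕ) (a : Alg q k) :
    Phi q hq k a 0 0 = a ∧ Phi q hq k a 1 0 = 0 ∧ Phi q hq k a 1 1 = sigma q k a := by
  induction a using alg_induction with
  | hr r => simp [Matrix.algebraMap_matrix_apply]
  | hg g _ => simp [Phi_gen, mat, sigma_gen]
  | ha a b h1 h2 =>
    obtain ⟨x1, x2, x3⟩ := h1
    obtain ⟨y1, y2, y3⟩ := h2
    simp [x1, x2, x3, y1, y2, y3]
  | hm a b h1 h2 =>
    obtain ⟨x1, x2, x3⟩ := h1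
    obtain ⟨y1, y2, y3⟩ := h2
    simp [Matrix.mul_apply, Fin.sum_univ_two, x1, x2, x3, y1, y2, y3]

/-- delta -/
noncomputable def delta (q : ℂ) (hq : q ≠ 0) (k : ℕ) : Alg q k →ₗ[ℂ] Alg q k where
  toFun a := Phi q hq k a 0 1
  map_add' a b := by simp
  map_smul' c a := by simp

theorem delta_gen (q : ℂ) (hq : q ≠ 0) (k g : ℕ) :
    delta q hq k (gen q k g) = dd q k g • gen q k (g - 1) := by
  change Phi q hq k _ 0 1 = _
  rw [Phi_gen]; simp [mat]

theorem delta_mul (q : ℂ) (hq : q ≠ 0) (k : ℕ) (a b : Alg q k) :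
    delta q hq k (a * b) = delta q hq k a * sigma q k b + a * delta q hq k b := by
  change Phi q hq k _ 0 1 = Phi q hq k _ 0 1 * _ + _ * Phi q hq k _ 0 1
  rw [map_mul, Matrix.mul_apply, Fin.sum_univ_two, (Phi_entries q hq k a).1,
    (Phi_entries q hq k b).2.2, add_comm]

theorem delta_algebraMap (q : ℂ) (hq : q ≠ 0) (k : ℕ) (r : ℂ) :
    delta q hq k (algebraMap ℂ _ r) = 0 := by
  change Phi q hq k _ 0 1 = _
  rw [AlgHom.commutes]
  simp [Matrix.algebraMap_matrix_apply]

theorem incl_sat (q : ℂ) (k : ℕ) : Sat q k (fun g => if g < k then gen q (k + 1) g else 0) where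
  zero g h := by rw [if_neg (by omega)]
  comm g h h1 h2 := by
    rw [if_pos (by omega), if_pos (by omega), if_pos (by omega)]
    exact (gen_sat q (k + 1)).comm g h h1 (by omega)

/-- inclusion -/
noncomputable def incl (q : ℂ) (k : ℕ) : Alg q k →ₐ[ℂ] Alg q (k + 1) := lift (incl_sat q k)

theorem incl_gen (q : ℂ) (k g : ℕ) (h : g < k) : incl q k (gen q k g) = gen q (k + 1) g := by
  rw [incl, lift_gen, if_pos h]

/-- The Ore extension structure of each step. -/
noncomputable def ore (q : ℂ) (hq : q ≠ 0) (k : ℕ) : OreData.{v} (Alg q k) (Alg q (k + 1)) where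
  f := incl q k
  t := gen q (k + 1) k
  σ := sigma q k
  δ := delta q hq k
  δ_mul := delta_mul q hq k
  comm a := by
    induction a using alg_induction with
    | hr r =>
      rw [delta_algebraMap, map_zero, add_zero, (sigma q k).commutes r, (incl q k).commutes r]
      exact Algebra.commutes r _
    | hg g h =>
      rw [delta_gen, sigma_gen, map_smul, map_smul, incl_gen _ _ _ h, incl_gen _ _ _ (by omega),
        mul_smul_comm]
      exact (gen_sat q (k + 1)).comm g k h (by omega)
    | ha a b h1 h2 =>
      simp only [map_add, add_mul, mul_add, h1, h2]
      abel
    | hm a b h1 h2 =>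
      rw [map_mul, map_mul, delta_mul, mul_assoc, h2, mul_add, ← mul_assoc, h1]
      simp only [map_add, map_mul, add_mul, mul_add, mul_assoc]
      abel
  gen := by
    rw [eq_top_iff]
    rintro a -
    induction a using alg_induction with
    | hr r => exact Subalgebra.algebraMap_mem _ r
    | hg g h =>
      apply Algebra.subset_adjoin
      by_cases hg : g = k
      · left; rw [hg]
      · right; exact ⟨gen q k g, incl_gen _ _ _ (by omega)⟩
    | ha a b h1 h2 => exact add_mem h1 h2
    | hm a b h1 h2 => exact mul_mem h1 h2
  univ {E} _ _ g T hT := by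
    have hs : Sat q (k + 1) (fun s => if s < k then g (gen q k s) else if s = k then T else 0) :=
      { zero := fun s h => by rw [if_neg (by omega), if_neg (by omega)]
        comm := fun s h h1 h2 => by
          rw [if_pos (by omega : s < k), if_pos (by omega : s - 1 < k)]
          by_cases hh : h = k
          · subst hh
            rw [if_neg (by omega), if_pos rfl, hT, sigma_gen, delta_gen, map_smul, map_smul,
              mul_smul_comm]
          · rw [if_pos (by omega), ← map_mul, (gen_sat q k).comm s h h1 (by omega)]
            simp }
    refine ⟨lift hs, fun a => ?_, ?_⟩
    · have : (lift hs).comp (incl q k) = g := by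
        apply alg_ext
        intro s h
        rw [AlgHom.comp_apply, incl_gen _ _ _ h, lift_gen, if_pos h]
      exact congrArg (fun F => F a) this
    · rw [lift_gen, if_neg (by omega), if_pos rfl]

theorem gldim_zero (q : ℂ) (M : ModuleCat.{v} (Alg q 0)) : HasProjectiveDimensionLE M 0 := by
  have hsurj : ∀ a : Alg q 0, ∃ r : ℂ, algebraMap ℂ _ r = a := by
    intro a
    induction a using alg_induction with
    | hr r => exact ⟨r, rfl⟩
    | hg g h => omega
    | ha a b h1 h2 =>
      obtain ⟨r, rfl⟩ := h1
      obtain ⟨s, rfl⟩ := h2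
      exact ⟨r + s, map_add _ _ _⟩
    | hm a b h1 h2 =>
      obtain ⟨r, rfl⟩ := h1
      obtain ⟨s, rfl⟩ := h2
      exact ⟨r * s, map_mul _ _ _⟩
  refine (projective_iff_hasProjectiveDimensionLE_zero M).1 ⟨fun {E X} φ e he => ?_⟩
  have hs := (ModuleCat.epi_iff_surjective _).mp he
  let _ : Module ℂ E := Module.compHom E (algebraMap ℂ (Alg q 0))
  let _ : Module ℂ X := Module.compHom X (algebraMap ℂ (Alg q 0))
  let _ : Module ℂ M := Module.compHom M (algebraMap ℂ (Alg q 0))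
  let e' : E →ₗ[ℂ] X :=
    { toFun := e.hom
      map_add' := map_add _
      map_smul' := fun a x => e.hom.map_smul (algebraMap ℂ (Alg q 0) a) x }
  let φ' : M →ₗ[ℂ] X :=
    { toFun := φ.hom
      map_add' := map_add _
      map_smul' := fun a x => φ.hom.map_smul (algebraMap ℂ (Alg q 0) a) x }
  obtain ⟨l, hl⟩ := Module.projective_lifting_property e' φ' hs
  let l' : M →ₗ[Alg q 0] E :=
    { toFun := l
      map_add' := map_add _
      map_smul' := fun a x => by
        obtain ⟨r, rfl⟩ := hsurj a
        exact l.map_smul r x }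
  refine ⟨ModuleCat.ofHom l', ?_⟩
  ext m
  exact congrArg (fun F => F m) hl

theorem gldim (q : ℂ) (hq : q ≠ 0) (k : ℕ) :
    ∀ M : ModuleCat.{v} (Alg q k), HasProjectiveDimensionLE M k := by
  induction k with
  | zero => exact gldim_zero q
  | succ k ih => exact (ore q hq k).gldim_step k ih

end Tower


namespace QHeisenberg

theorem X_comm (n : ℕ) (q : ℂ) (i j : Fin n) : X n q i * X n q j = X n q j * X n q i := by
  simpa [X] using RingQuot.mkAlgHom_rel ℂ (Rel.xx (q := q) i j)

theorem Y_comm (n : ℕ) (q : ℂ) (i j : Fin n) : Y n q i * Y n q j = Y n q j * Y n q i := by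
  simpa [Y] using RingQuot.mkAlgHom_rel ℂ (Rel.yy (q := q) i j)

theorem Z_comm (n : ℕ) (q : ℂ) (i j : Fin n) : Z n q i * Z n q j = Z n q j * Z n q i := by
  simpa [Z] using RingQuot.mkAlgHom_rel ℂ (Rel.zz (q := q) i j)

theorem XZ_rel (n : ℕ) (q : ℂ) (i : Fin n) : X n q i * Z n q i = q • (Z n q i * X n q i) := by
  simpa [X, Z] using RingQuot.mkAlgHom_rel ℂ (Rel.xz (q := q) i)

theorem YZ_rel (n : ℕ) (q : ℂ) (i : Fin n) : Y n q i * Z n q i = q⁻¹ • (Z n q i * Y n q i) := by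
  simpa [Y, Z] using RingQuot.mkAlgHom_rel ℂ (Rel.yz (q := q) i)

theorem XY_rel (n : ℕ) (q : ℂ) (i : Fin n) :
    X n q i * Y n q i = q⁻¹ • (Y n q i * X n q i) + Z n q i := by
  simpa [X, Y, Z] using RingQuot.mkAlgHom_rel ℂ (Rel.xy (q := q) i)

theorem XY_ne (n : ℕ) (q : ℂ) (i j : Fin n) (h : i ≠ j) :
    X n q i * Y n q j = Y n q j * X n q i := by
  simpa [X, Y] using RingQuot.mkAlgHom_rel ℂ (Rel.xyne (q := q) i j h)

theorem XZ_ne (n : ℕ) (q : ℂ) (i j : Fin n) (h : i ≠ j) :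
    X n q i * Z n q j = Z n q j * X n q i := by
  simpa [X, Z] using RingQuot.mkAlgHom_rel ℂ (Rel.xzne (q := q) i j h)

theorem YZ_ne (n : ℕ) (q : ℂ) (i j : Fin n) (h : i ≠ j) :
    Y n q i * Z n q j = Z n q j * Y n q i := by
  simpa [Y, Z] using RingQuot.mkAlgHom_rel ℂ (Rel.yzne (q := q) i j h)

/-- The generators of `𝔥_n(q)` listed as `z₀, y₀, x₀, z₁, y₁, x₁, …`. -/
def fam (n : ℕ) (q : ℂ) (g : ℕ) : H n q :=
  if h : g / 3 < n then
    (if g % 3 = 0 then Z n q ⟨g / 3, h⟩ else if g % 3 = 1 then Y n q ⟨g / 3, h⟩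
      else X n q ⟨g / 3, h⟩)
  else 0

theorem fam_z (n : ℕ) (q : ℂ) (i : Fin n) : fam n q (3 * i.1) = Z n q i := by
  have h : 3 * i.1 / 3 = i.1 := by omega
  have h' : 3 * i.1 % 3 = 0 := by omega
  simp [fam, h, h']

theorem fam_y (n : ℕ) (q : ℂ) (i : Fin n) : fam n q (3 * i.1 + 1) = Y n q i := by
  have h : (3 * i.1 + 1) / 3 = i.1 := by omega
  have h' : (3 * i.1 + 1) % 3 = 1 := by omega
  simp [fam, h, h']

theorem fam_x (n : ℕ) (q : ℂ) (i : Fin n) : fam n q (3 * i.1 + 2) = X n q i := by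
  have h : (3 * i.1 + 2) / 3 = i.1 := by omega
  have h' : (3 * i.1 + 2) % 3 = 2 := by omega
  simp [fam, h, h']

theorem index_cases (n g : ℕ) (h : g < 3 * n) :
    ∃ i : Fin n, g = 3 * i.1 ∨ g = 3 * i.1 + 1 ∨ g = 3 * i.1 + 2 :=
  ⟨⟨g / 3, by omega⟩, by simp only; omega⟩

theorem w_ne (q : ℂ) (h g : ℕ) (e : h / 3 ≠ g / 3) : Tower.w q h g = 1 := by
  unfold Tower.w; rw [if_neg e]

theorem w_yz (q : ℂ) (i : ℕ) : Tower.w q (3 * i + 1) (3 * i) = q := by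
  unfold Tower.w; rw [if_pos (by omega), if_pos (by omega)]

theorem w_xz (q : ℂ) (i : ℕ) : Tower.w q (3 * i + 2) (3 * i) = q⁻¹ := by
  unfold Tower.w; rw [if_pos (by omega), if_neg (by omega), if_pos (by omega)]

theorem w_xy (q : ℂ) (i : ℕ) : Tower.w q (3 * i + 2) (3 * i + 1) = q := by
  unfold Tower.w; rw [if_pos (by omega), if_neg (by omega), if_neg (by omega)]

theorem dd_zero (q : ℂ) (h g : ℕ) (e : ¬ (h = g + 1 ∧ g % 3 = 1)) : Tower.dd q h g = 0 := by
  unfold Tower.dd; rw [if_neg e]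

theorem dd_xy (q : ℂ) (i : ℕ) : Tower.dd q (3 * i + 2) (3 * i + 1) = -q := by
  unfold Tower.dd; rw [if_pos (by omega)]

theorem fam_comm_ne (n : ℕ) (q : ℂ) (g h : ℕ) (hg : g < 3 * n) (hh : h < 3 * n)
    (e : g / 3 ≠ h / 3) : fam n q g * fam n q h = fam n q h * fam n q g := by
  obtain ⟨i, hi⟩ := index_cases n g hg
  obtain ⟨j, hj⟩ := index_cases n h hh
  have hij : i ≠ j := by rintro rfl; omega
  rcases hi with rfl | rfl | rfl <;> rcases hj with rfl | rfl | rfl <;>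
    simp only [fam_x, fam_y, fam_z]
  · exact Z_comm ..
  · exact (YZ_ne _ _ _ _ hij.symm).symm
  · exact (XZ_ne _ _ _ _ hij.symm).symm
  · exact YZ_ne _ _ _ _ hij
  · exact Y_comm ..
  · exact (XY_ne _ _ _ _ hij.symm).symm
  · exact XZ_ne _ _ _ _ hij
  · exact XY_ne _ _ _ _ hij
  · exact X_comm ..

theorem cancel_aux {E : Type} [Ring E] [Algebra ℂ E] (q : ℂ) (a z : E) :
    a + q • z + (-q) • z = a := by
  rw [neg_smul, add_neg_cancel_right]

theorem fam_sat (n : ℕ) (q : ℂ) (hq : q ≠ 0) : Tower.Sat q (3 * n) (fam n q) where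
  zero g h := by unfold fam; rw [dif_neg (by omega)]
  comm g h h1 h2 := by
    by_cases e : g / 3 = h / 3
    · obtain ⟨i, hi⟩ := index_cases n g (by omega)
      have hc : (g = 3 * i.1 ∧ h = 3 * i.1 + 1) ∨ (g = 3 * i.1 ∧ h = 3 * i.1 + 2) ∨
        (g = 3 * i.1 + 1 ∧ h = 3 * i.1 + 2) := by omega
      rcases hc with ⟨rfl, rfl⟩ | ⟨rfl, rfl⟩ | ⟨rfl, rfl⟩
      · rw [dd_zero _ _ _ (by omega), w_yz, fam_z, fam_y, YZ_rel, smul_smul, mul_inv_cancel₀ hq]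
        simp
      · rw [dd_zero _ _ _ (by omega), w_xz, fam_z, fam_x, XZ_rel, smul_smul, inv_mul_cancel₀ hq]
        simp
      · rw [dd_xy, w_xy, Nat.add_sub_cancel, fam_z, fam_x, fam_y, XY_rel, smul_add, smul_smul,
          mul_inv_cancel₀ hq, one_smul]
        exact (cancel_aux q _ _).symm
    · rw [w_ne _ _ _ (Ne.symm e), dd_zero _ _ _ (by omega), one_smul, zero_smul, add_zero]
      exact fam_comm_ne n q g h (by omega) h2 e

/-- Images of the generators in the tower algebra. -/
def bgen (n : ℕ) (q : ℂ) : GenIdx n → Tower.Alg q (3 * n)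
  | Sum.inl i => Tower.gen q (3 * n) (3 * i.1 + 2)
  | Sum.inr (Sum.inl i) => Tower.gen q (3 * n) (3 * i.1 + 1)
  | Sum.inr (Sum.inr i) => Tower.gen q (3 * n) (3 * i.1)

theorem gen_comm_ne (n : ℕ) (q : ℂ) (g h : ℕ) (hg : g < 3 * n) (hh : h < 3 * n)
    (e : g / 3 ≠ h / 3) : Tower.gen q (3 * n) g * Tower.gen q (3 * n) h =
      Tower.gen q (3 * n) h * Tower.gen q (3 * n) g := by
  rcases Nat.lt_or_ge g h with hl | hl
  · rw [(Tower.gen_sat q (3 * n)).comm g h hl hh, w_ne _ _ _ (Ne.symm e),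
      dd_zero _ _ _ (by omega), one_smul, zero_smul, add_zero]
  · rw [(Tower.gen_sat q (3 * n)).comm h g (by omega) hg, w_ne _ _ _ e,
      dd_zero _ _ _ (by omega), one_smul, zero_smul, add_zero]

theorem gen_comm_self (n : ℕ) (q : ℂ) (c : ℕ) (hc : c < 3) (i j : Fin n) :
    Tower.gen q (3 * n) (3 * i.1 + c) * Tower.gen q (3 * n) (3 * j.1 + c) =
      Tower.gen q (3 * n) (3 * j.1 + c) * Tower.gen q (3 * n) (3 * i.1 + c) := by
  by_cases e : i = j
  · rw [e]
  · have := Fin.val_ne_of_ne e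
    exact gen_comm_ne n q _ _ (by omega) (by omega) (by omega)

theorem bgen_rel (n : ℕ) (q : ℂ) (hq : q ≠ 0) ⦃a b : FreeAlgebra ℂ (GenIdx n)⦄
    (h : Rel n q a b) : FreeAlgebra.lift ℂ (bgen n q) a = FreeAlgebra.lift ℂ (bgen n q) b := by
  have S := (Tower.gen_sat q (3 * n)).comm
  cases h with
  | xx i j => simpa [fX, bgen] using gen_comm_self n q 2 (by omega) i j
  | yy i j => simpa [fY, bgen] using gen_comm_self n q 1 (by omega) i j
  | zz i j => simpa [fZ, bgen] using gen_comm_self n q 0 (by omega) i j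
  | xz i =>
    simp only [fX, fZ, map_mul, map_smul, FreeAlgebra.lift_ι_apply, bgen]
    rw [S (3 * i.1) (3 * i.1 + 2) (by omega) (by omega), w_xz, dd_zero _ _ _ (by omega),
      zero_smul, add_zero, smul_smul, mul_inv_cancel₀ hq, one_smul]
  | yz i =>
    simp only [fY, fZ, map_mul, map_smul, FreeAlgebra.lift_ι_apply, bgen]
    rw [S (3 * i.1) (3 * i.1 + 1) (by omega) (by omega), w_yz, dd_zero _ _ _ (by omega),
      zero_smul, add_zero, smul_smul, inv_mul_cancel₀ hq, one_smul]
  | xy i =>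
    simp only [fX, fY, fZ, map_mul, map_add, map_smul, FreeAlgebra.lift_ι_apply, bgen]
    rw [S (3 * i.1 + 1) (3 * i.1 + 2) (by omega) (by omega), w_xy, dd_xy, Nat.add_sub_cancel,
      smul_add, smul_smul, smul_smul, mul_neg, inv_mul_cancel₀ hq, one_smul]
    simp
  | xyne i j e =>
    have := Fin.val_ne_of_ne e
    simp only [fX, fY, map_mul, FreeAlgebra.lift_ι_apply, bgen]
    exact gen_comm_ne n q _ _ (by omega) (by omega) (by omega)
  | xzne i j e =>
    have := Fin.val_ne_of_ne e
    simp only [fX, fZ, map_mul, FreeAlgebra.lift_ι_apply, bgen]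
    exact gen_comm_ne n q _ _ (by omega) (by omega) (by omega)
  | yzne i j e =>
    have := Fin.val_ne_of_ne e
    simp only [fY, fZ, map_mul, FreeAlgebra.lift_ι_apply, bgen]
    exact gen_comm_ne n q _ _ (by omega) (by omega) (by omega)

/-- The map back to the tower algebra. -/
def back (n : ℕ) (q : ℂ) (hq : q ≠ 0) : H n q →ₐ[ℂ] Tower.Alg q (3 * n) :=
  RingQuot.liftAlgHom ℂ ⟨FreeAlgebra.lift ℂ (bgen n q), bgen_rel n q hq⟩

theorem back_mk (n : ℕ) (q : ℂ) (hq : q ≠ 0) (s : GenIdx n) :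
    back n q hq (RingQuot.mkAlgHom ℂ (Rel n q) (FreeAlgebra.ι ℂ s)) = bgen n q s := by
  simp [back]

/-- `𝔥_n(q)` is the top of the tower. -/
def iso (n : ℕ) (q : ℂ) (hq : q ≠ 0) : Tower.Alg q (3 * n) ≃ₐ[ℂ] H n q :=
  AlgEquiv.ofAlgHom (Tower.lift (fam_sat n q hq)) (back n q hq)
    (by
      apply RingQuot.ringQuot_ext'
      apply FreeAlgebra.hom_ext
      funext s
      change Tower.lift (fam_sat n q hq)
        (back n q hq (RingQuot.mkAlgHom ℂ (Rel n q) (FreeAlgebra.ι ℂ s))) =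
          RingQuot.mkAlgHom ℂ (Rel n q) (FreeAlgebra.ι ℂ s)
      rw [back_mk]
      rcases s with i | i | i
      · exact (Tower.lift_gen _ _).trans (fam_x n q i)
      · exact (Tower.lift_gen _ _).trans (fam_y n q i)
      · exact (Tower.lift_gen _ _).trans (fam_z n q i))
    (by
      apply Tower.alg_ext
      intro g hg
      change back n q hq (Tower.lift (fam_sat n q hq) (Tower.gen q (3 * n) g)) =
        Tower.gen q (3 * n) g
      rw [Tower.lift_gen]
      obtain ⟨i, hi⟩ := index_cases n g hg
      rcases hi with rfl | rfl | rfl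
      · rw [fam_z]; exact back_mk n q hq (Sum.inr (Sum.inr i))
      · rw [fam_y]; exact back_mk n q hq (Sum.inr (Sum.inl i))
      · rw [fam_x]; exact back_mk n q hq (Sum.inl i))

end QHeisenberg

attribute [local instance] RingHomInvPair.of_ringEquiv in
theorem pd_transfer {R S : Type} [Ring R] [Ring S] (e : R ≃+* S) (d : ℕ)
    (hR : ∀ M : ModuleCat.{v} R, HasProjectiveDimensionLE M d) (M : ModuleCat.{v} S) :
    HasProjectiveDimensionLE M d := by
  have := hR ((ModuleCat.restrictScalars (RingHomClass.toRingHom e)).obj M)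
  let e' : ((ModuleCat.restrictScalars (RingHomClass.toRingHom e)).obj M) ≃ₛₗ[RingHomClass.toRingHom e] M :=
    { toFun := fun x => x
      invFun := fun x => x
      left_inv := fun _ => rfl
      right_inv := fun _ => rfl
      map_add' := fun _ _ => rfl
      map_smul' := fun _ _ => rfl }
  exact ModuleCat.hasProjectiveDimensionLE_of_semiLinearEquiv e e' d

end Helpers

namespace QHeisenberg

open CategoryTheory

/-- A module `M` admits a projective resolution of length at most `d`:
there is a projective resolution whose terms vanish in degrees above `d`. -/
def HasProjResLengthLE {R : Type} [Ring R] (M : ModuleCat R) (d : ℕ) : Prop :=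
  ∃ P : ProjectiveResolution M, ∀ k : ℕ, d < k → Limits.IsZero (P.complex.X k)

/-- For `n ≥ 1` and `q ∈ ℂ` nonzero and not a root of unity, the global
dimension of `𝔥_n(q)` is at most `3n`: every left `𝔥_n(q)`-module admits a projective
resolution of length at most `3n`. -/
theorem globalDimension_le_three_n (n : ℕ) (hn : 1 ≤ n) (q : ℂ) (hq : q ≠ 0)
    (hq' : NotRootOfUnity q) (M : ModuleCat (H n q)) :
    HasProjResLengthLE M (3 * n) := by
  exact exists_res (3 * n) M
    (pd_transfer (QHeisenberg.iso n q hq).toRingEquiv (3 * n) (Tower.gldim q hq (3 * n)) M)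

end QHeisenberg
end
end

section
/- Let n ≥ 1 and let q ∈ ℂ be nonzero and not a root of unity. Then the trivial left 𝔥_n(q)-module ℂ_ε has projective dimension exactly 3n: it admits a projective resolution of length 3n, but admits no projective resolution of length 3n − 1. -/
noncomputable section

open scoped BigOperators

namespace QHeisenberg

open CategoryTheory

/-- The augmentation homomorphism `ε : 𝔥_n(q) → ℂ` sending every generator to `0`. -/
def eps (n : ℕ) (q : ℂ) : H n q →ₐ[ℂ] ℂ :=
  RingQuot.liftAlgHom ℂ ⟨FreeAlgebra.lift ℂ (fun _ => (0 : ℂ)), by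
    intro a b h
    induction h <;> simp [fX, fY, fZ]⟩

/-- The trivial left `𝔥_n(q)`-module `ℂ_ε`: the complex numbers, with every generator
acting by `0` (restriction of scalars along `ε`). -/
def trivMod (n : ℕ) (q : ℂ) : ModuleCat (H n q) :=
  (ModuleCat.restrictScalars (eps n q).toRingHom).obj (ModuleCat.of ℂ ℂ)

section Cat

open Abelian

variable {C : Type 1} [Category.{0} C] [Abelian C]

lemma cat_step [HasExt.{0} C] (T : C) (k : ℕ) {M N : C} (ρ : M ⟶ M) (π : M ⟶ N) (w : ρ ≫ π = 0)
    (hS : (ShortComplex.mk ρ π w).ShortExact)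
    (hpd : HasProjectiveDimensionLT M (k + 1))
    (hne : ∃ e : Ext M T k, e ≠ 0)
    (hρ : ∀ e : Ext M T k, (Ext.mk₀ ρ).comp e (zero_add k) = 0) :
    HasProjectiveDimensionLT N (k + 2) ∧ ∃ e : Ext N T (k + 1), e ≠ 0 := by
  refine ⟨hS.hasProjectiveDimensionLT_X₃ (k + 1) hpd
    (hasProjectiveDimensionLT_of_ge M (k + 1) (k + 2) (by omega)), ?_⟩
  obtain ⟨e, he⟩ := hne
  refine ⟨hS.extClass.comp e (add_comm 1 k), fun h => he ?_⟩
  obtain ⟨x, hx⟩ := Ext.contravariant_sequence_exact₁ hS T e (add_comm 1 k) h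
  rw [← hx]
  exact hρ x

lemma cat_kill [HasExt.{0} C] (T : C) (k : ℕ) {M N : C} (ρ : M ⟶ M) (π : M ⟶ N) (w : ρ ≫ π = 0)
    (hS : (ShortComplex.mk ρ π w).ShortExact)
    (hpd : HasProjectiveDimensionLT M (k + 1))
    (θ θ' : M ⟶ M) (η : N ⟶ N) (h₁ : ρ ≫ θ = θ' ≫ ρ) (h₂ : θ ≫ π = π ≫ η)
    (hθ : ∀ e : Ext M T k, (Ext.mk₀ θ').comp e (zero_add k) = 0) (e : Ext N T (k + 1)) :
    (Ext.mk₀ η).comp e (zero_add (k + 1)) = 0 := by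
  obtain ⟨x, rfl⟩ := Ext.contravariant_sequence_exact₃ hS T e
    (Ext.eq_zero_of_hasProjectiveDimensionLT _ (k + 1) le_rfl) (add_comm 1 k)
  let f : ShortComplex.mk ρ π w ⟶ ShortComplex.mk ρ π w :=
    { τ₁ := θ', τ₂ := θ, τ₃ := η, comm₁₂ := h₁.symm, comm₂₃ := h₂ }
  have nat := ShortComplex.ShortExact.extClass_naturality hS hS f
  change hS.extClass.comp (Ext.mk₀ θ') (add_zero 1) =
    (Ext.mk₀ η).comp hS.extClass (zero_add 1) at nat
  rw [← Ext.comp_assoc (a₁₂ := 1) _ _ _ (by lia) (by lia) (by lia), ← nat,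
    Ext.comp_assoc (a₂₃ := k) _ _ _ (by lia) (by lia) (by lia), hθ, Ext.comp_zero]

end Cat

lemma ext_zero_of_res {R : Type} [Ring R] {M : ModuleCat.{0} R} {d : ℕ}
    (h : HasProjResLengthLE M d) (T : ModuleCat.{0} R) (k : ℕ) (hk : d < k)
    (e : Abelian.Ext M T k) : e = 0 := by
  obtain ⟨P, hP⟩ := h
  obtain ⟨f, hf, rfl⟩ := P.extMk_surjective e (k + 1) rfl
  obtain rfl : f = 0 := (hP k hk).eq_of_src _ _
  simp

lemma splice {R : Type} [Ring R] {K P M : ModuleCat.{0} R} (i : K ⟶ P) (p : P ⟶ M) (w : i ≫ p = 0)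
    (hS : (ShortComplex.mk i p w).ShortExact) [Projective P] (d : ℕ)
    (h : HasProjResLengthLE K d) : HasProjResLengthLE M (d + 1) := by
  obtain ⟨Q, hQ⟩ := h
  have hi : Mono i := hS.mono_f
  have hp : Epi p := hS.epi_g
  obtain ⟨a, wa, ha, exa⟩ : ∃ (a : Q.complex.X 0 ⟶ K) (wa : Q.complex.d 1 0 ≫ a = 0), Epi a ∧
      (ShortComplex.mk _ a wa).Exact :=
    ⟨Q.π.f 0, Q.complex_d_comp_π_f_zero, inferInstanceAs (Epi (Q.π.f 0)), Q.exact₀⟩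
  have w1 : Q.complex.d 1 0 ≫ (a ≫ i) = 0 := by
    rw [← Category.assoc, wa, Limits.zero_comp]
  let D : ChainComplex (ModuleCat.{0} R) ℕ := ChainComplex.augment Q.complex (a ≫ i) w1
  have w0 : (a ≫ i) ≫ p = 0 := by
    rw [Category.assoc, w, Limits.comp_zero]
  have w2 : D.d 1 0 ≫ p = 0 := w0
  let pi : D ⟶ (ChainComplex.single₀ _).obj M :=
    (ChainComplex.toSingle₀Equiv D M).symm ⟨p, w2⟩
  have hpi : pi.f 0 = p := ChainComplex.toSingle₀Equiv_symm_apply_f_zero _ _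
  have ex0 : (ShortComplex.mk (a ≫ i) p w0).Exact := by
    let φ : ShortComplex.mk (a ≫ i) p w0 ⟶ ShortComplex.mk i p w :=
      { τ₁ := a, τ₂ := 𝟙 _, τ₃ := 𝟙 _ }
    have h1 : Epi φ.τ₁ := ha
    have h2 : IsIso φ.τ₂ := inferInstanceAs (IsIso (𝟙 P))
    have h3 : Mono φ.τ₃ := inferInstanceAs (Mono (𝟙 M))
    exact (ShortComplex.exact_iff_of_epi_of_isIso_of_mono φ).2 hS.exact
  have ex1 : (ShortComplex.mk (Q.complex.d 1 0) (a ≫ i) w1).Exact := by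
    let φ : ShortComplex.mk _ a wa ⟶ ShortComplex.mk (Q.complex.d 1 0) (a ≫ i) w1 :=
      { τ₁ := 𝟙 _, τ₂ := 𝟙 _, τ₃ := i }
    have h1 : Epi φ.τ₁ := inferInstanceAs (Epi (𝟙 _))
    have h2 : IsIso φ.τ₂ := inferInstanceAs (IsIso (𝟙 _))
    have h3 : Mono φ.τ₃ := hi
    exact (ShortComplex.exact_iff_of_epi_of_isIso_of_mono φ).1 exa
  have qi : QuasiIso pi := ⟨fun n => by
    cases n
    · rw [ChainComplex.quasiIsoAt₀_iff, ShortComplex.quasiIso_iff_of_zeros']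
      · refine (ShortComplex.exact_and_epi_g_iff_of_iso ?_).2
          ⟨ex0, hp⟩
        exact ShortComplex.isoMk (Iso.refl _) (Iso.refl _) (Iso.refl _)
          ((Category.id_comp _).trans (Category.comp_id _).symm)
          ((Category.id_comp _).trans (hpi.symm.trans (Category.comp_id _).symm))
      all_goals rfl
    · rename_i n
      rw [quasiIsoAt_iff_exactAt']
      · rw [HomologicalComplex.exactAt_iff' _ (n + 1 + 1) (n + 1) n (by simp) (by simp)]
        cases n
        · exact ex1
        · rename_i n
          exact Q.exact_succ n
      · apply ChainComplex.exactAt_succ_single_obj⟩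
  have pr : ∀ n, Projective (D.X n) := by
    intro n
    cases n
    · assumption
    · exact Q.projective _
  refine ⟨{ complex := D, projective := pr, π := pi, quasiIso := qi }, ?_⟩
  intro k hk
  cases k
  · omega
  · exact hQ _ (by omega)

lemma res_of_pd {R : Type} [Ring R] (d : ℕ) : ∀ (M : ModuleCat.{0} R)
    (_ : HasProjectiveDimensionLT M (d + 1)), HasProjResLengthLE M d := by
  induction d with
  | zero =>
    intro M h
    have : Projective M := projective_iff_hasProjectiveDimensionLT_one.2 h
    refine ⟨ProjectiveResolution.self M, fun k hk => ?_⟩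
    apply HomologicalComplex.isZero_single_obj_X
    simp; omega
  | succ d ih =>
    intro M h
    have hS : (ShortComplex.mk (Limits.kernel.ι (Projective.π M)) (Projective.π M)
      (Limits.kernel.condition _)).ShortExact :=
      { exact := ShortComplex.exact_of_f_is_kernel _ (Limits.kernelIsKernel _) }
    refine splice _ _ _ hS d (ih _ ?_)
    exact (hS.hasProjectiveDimensionLT_X₃_iff d (by dsimp; infer_instance)).1 h


/-- The `q`-integers appearing in `x y ^ b`. -/
def sq (q : ℂ) : ℕ → ℂ
  | 0 => 0
  | b + 1 => q⁻¹ * sq q b + q ^ b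

/-- exponent vectors -/
abbrev Mon (n : ℕ) := GenIdx n → ℕ

abbrev ix {n : ℕ} (i : Fin n) : GenIdx n := Sum.inl i
abbrev iy {n : ℕ} (i : Fin n) : GenIdx n := Sum.inr (Sum.inl i)
abbrev iz {n : ℕ} (i : Fin n) : GenIdx n := Sum.inr (Sum.inr i)

/-- unit exponent vector -/
def dl {n : ℕ} (g : GenIdx n) : Mon n := Pi.single g 1

/-- functions on exponent vectors -/
abbrev Fn (n : ℕ) := Mon n → ℂ

def opY (n : ℕ) (i : Fin n) : Module.End ℂ (Fn n) where
  toFun f m := f (m + dl (iy i))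
  map_add' _ _ := rfl
  map_smul' _ _ := rfl

def opZ (n : ℕ) (q : ℂ) (i : Fin n) : Module.End ℂ (Fn n) where
  toFun f m := q ^ (m (iy i)) * q⁻¹ ^ (m (ix i)) * f (m + dl (iz i))
  map_add' _ _ := by ext; simp [mul_add]
  map_smul' _ _ := by ext; simp; ring

def opX (n : ℕ) (q : ℂ) (i : Fin n) : Module.End ℂ (Fn n) where
  toFun f m := q⁻¹ ^ (m (iy i)) * f (m + dl (ix i)) +
    sq q (m (iy i)) * q⁻¹ ^ (m (ix i)) * f (m - dl (iy i) + dl (iz i))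
  map_add' _ _ := by ext; simp; ring
  map_smul' _ _ := by ext; simp; ring

lemma opX_apply (n : ℕ) (q : ℂ) (i : Fin n) (f : Fn n) (m : Mon n) :
    opX n q i f m = q⁻¹ ^ (m (iy i)) * f (m + dl (ix i)) +
    sq q (m (iy i)) * q⁻¹ ^ (m (ix i)) * f (m - dl (iy i) + dl (iz i)) := rfl

lemma opY_apply (n : ℕ) (i : Fin n) (f : Fn n) (m : Mon n) :
    opY n i f m = f (m + dl (iy i)) := rfl

lemma opZ_apply (n : ℕ) (q : ℂ) (i : Fin n) (f : Fn n) (m : Mon n) :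
    opZ n q i f m = q ^ (m (iy i)) * q⁻¹ ^ (m (ix i)) * f (m + dl (iz i)) := rfl

lemma dl_apply {n : ℕ} (g h : GenIdx n) : dl g h = if h = g then 1 else 0 := by
  simp [dl, Pi.single_apply]

lemma sub_swap {n : ℕ} (m : Mon n) (g h : GenIdx n) (hm : g ≠ h) :
    m + dl g - dl h = m - dl h + dl g := by
  ext k
  simp only [Pi.add_apply, Pi.sub_apply, dl_apply]
  split_ifs with h1 h2
  · exact absurd (h1.symm.trans h2) hm
  all_goals omega

lemma rel_xx (n : ℕ) (q : ℂ) (i j : Fin n) : opX n q j ∘ₗ opX n q i = opX n q i ∘ₗ opX n q j := by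
  rcases eq_or_ne i j with rfl | hij
  · rfl
  ext f m
  simp only [LinearMap.comp_apply, opX_apply]
  have e1 : m - dl (iy j) + dl (iz j) - dl (iy i) + dl (iz i) =
     m - dl (iy i) + dl (iz i) - dl (iy j) + dl (iz j) := by
    rw [sub_swap _ (iz j) (iy i) (by simp), sub_swap _ (iz i) (iy j) (by simp), tsub_right_comm,
      add_right_comm]
  have e2 : m + dl (ix i) - dl (iy j) + dl (iz j) = m - dl (iy j) + dl (iz j) + dl (ix i) := by
    rw [sub_swap _ _ _ (by simp), add_right_comm]
  have e3 : m + dl (ix j) - dl (iy i) + dl (iz i) = m - dl (iy i) + dl (iz i) + dl (ix j) := by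
    rw [sub_swap _ _ _ (by simp), add_right_comm]
  rw [e1, e2, e3, add_right_comm m]
  simp [dl_apply, hij, hij.symm]
  ring

lemma rel_yy (n : ℕ) (i j : Fin n) : opY n j ∘ₗ opY n i = opY n i ∘ₗ opY n j := by
  ext f m
  simp only [LinearMap.comp_apply, opY_apply]
  rw [add_right_comm]

lemma rel_zz (n : ℕ) (q : ℂ) (i j : Fin n) : opZ n q j ∘ₗ opZ n q i = opZ n q i ∘ₗ opZ n q j := by
  ext f m
  simp only [LinearMap.comp_apply, opZ_apply]
  rw [add_right_comm]
  simp [dl_apply]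
  ring

lemma rel_xz (n : ℕ) (q : ℂ) (hq : q ≠ 0) (i : Fin n) :
    opZ n q i ∘ₗ opX n q i = q • (opX n q i ∘ₗ opZ n q i) := by
  ext f m
  simp only [LinearMap.comp_apply, opZ_apply, opX_apply, LinearMap.smul_apply, Pi.smul_apply,
    smul_eq_mul]
  have e2 : m + dl (iz i) - dl (iy i) + dl (iz i) = m - dl (iy i) + dl (iz i) + dl (iz i) := by
    rw [sub_swap _ _ _ (by simp)]
  rw [e2, add_right_comm m (dl (iz i))]
  simp only [Pi.add_apply, Pi.sub_apply, dl_apply]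
  rcases m (iy i) with _ | b
  · simp [sq, pow_succ]
    field_simp
  · simp [pow_succ]
    field_simp

lemma rel_yz (n : ℕ) (q : ℂ) (hq : q ≠ 0) (i : Fin n) :
    opZ n q i ∘ₗ opY n i = q⁻¹ • (opY n i ∘ₗ opZ n q i) := by
  ext f m
  simp only [LinearMap.comp_apply, opZ_apply, opY_apply, LinearMap.smul_apply, Pi.smul_apply,
    smul_eq_mul]
  rw [add_right_comm m (dl (iz i))]
  simp [dl_apply, pow_succ]
  field_simp

lemma rel_xy (n : ℕ) (q : ℂ) (hq : q ≠ 0) (i : Fin n) :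
    opY n i ∘ₗ opX n q i = q⁻¹ • (opX n q i ∘ₗ opY n i) + opZ n q i := by
  ext f m
  simp only [LinearMap.comp_apply, opZ_apply, opX_apply, opY_apply, LinearMap.smul_apply,
    Pi.smul_apply, smul_eq_mul, LinearMap.add_apply, Pi.add_apply]
  rw [add_tsub_cancel_right, add_right_comm m (dl (iy i))]
  simp only [dl_apply]
  rcases h : m (iy i) with _ | b
  · simp [sq, pow_succ]
  · have : m - dl (iy i) + dl (iz i) + dl (iy i) = m + dl (iz i) := by
      rw [add_right_comm, tsub_add_cancel_of_le]
      intro g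
      rw [dl_apply]
      split_ifs with hg
      · rw [hg, h]; exact Nat.succ_le_succ (Nat.zero_le _)
      · exact Nat.zero_le _
    rw [this]
    simp [pow_succ, sq]
    field_simp
    ring

lemma rel_xyne (n : ℕ) (q : ℂ) (i j : Fin n) (hij : i ≠ j) :
    opY n j ∘ₗ opX n q i = opX n q i ∘ₗ opY n j := by
  ext f m
  simp only [LinearMap.comp_apply, opX_apply, opY_apply]
  have e3 : m + dl (iy j) - dl (iy i) + dl (iz i) = m - dl (iy i) + dl (iz i) + dl (iy j) := by
    rw [sub_swap _ _ _ (by simpa using hij.symm), add_right_comm]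
  rw [e3, add_right_comm m]
  simp [dl_apply, hij]

lemma rel_xzne (n : ℕ) (q : ℂ) (i j : Fin n) (hij : i ≠ j) :
    opZ n q j ∘ₗ opX n q i = opX n q i ∘ₗ opZ n q j := by
  ext f m
  simp only [LinearMap.comp_apply, opX_apply, opZ_apply]
  have e3 : m + dl (iz j) - dl (iy i) + dl (iz i) = m - dl (iy i) + dl (iz i) + dl (iz j) := by
    rw [sub_swap _ _ _ (by simp), add_right_comm]
  rw [e3, add_right_comm m]
  simp [dl_apply, hij.symm]
  ring

lemma rel_yzne (n : ℕ) (q : ℂ) (i j : Fin n) (hij : i ≠ j) :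
    opZ n q j ∘ₗ opY n i = opY n i ∘ₗ opZ n q j := by
  ext f m
  simp only [LinearMap.comp_apply, opY_apply, opZ_apply]
  rw [add_right_comm m]
  simp [dl_apply, hij.symm]

/-- operators for the generators -/
def opG (n : ℕ) (q : ℂ) : GenIdx n → Module.End ℂ (Fn n)
  | Sum.inl i => opX n q i
  | Sum.inr (Sum.inl i) => opY n i
  | Sum.inr (Sum.inr i) => opZ n q i

/-- The right action of the algebra on functions on exponent vectors. -/
def rep (n : ℕ) (q : ℂ) (hq : q ≠ 0) : H n q →ₐ[ℂ] (Module.End ℂ (Fn n))ᵐᵒᵖ :=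
  RingQuot.liftAlgHom ℂ ⟨FreeAlgebra.lift ℂ (fun g => MulOpposite.op (opG n q g)), by
    intro a b h
    induction h <;>
      simp only [fX, fY, fZ, map_mul, map_smul, map_add, FreeAlgebra.lift_ι_apply, opG,
        ← MulOpposite.op_mul, ← MulOpposite.op_smul, ← MulOpposite.op_add, Module.End.mul_eq_comp,
        MulOpposite.op_inj]
    · apply rel_xx
    · apply rel_yy
    · apply rel_zz
    · exact rel_xz n q hq _
    · exact rel_yz n q hq _
    · exact rel_xy n q hq _
    · apply rel_xyne; assumption
    · apply rel_xzne; assumption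
    · apply rel_yzne; assumption⟩

/-- The generators of the algebra. -/
def gen (n : ℕ) (q : ℂ) (g : GenIdx n) : H n q :=
  RingQuot.mkAlgHom ℂ (Rel n q) (FreeAlgebra.ι ℂ g)

/-- The right action. -/
def act {n : ℕ} {q : ℂ} (hq : q ≠ 0) (f : Fn n) (a : H n q) : Fn n := (rep n q hq a).unop f

lemma act_gen {n : ℕ} {q : ℂ} (hq : q ≠ 0) (f : Fn n) (g : GenIdx n) :
    act hq f (gen n q g) = opG n q g f := by
  simp [act, rep, gen]

lemma act_mul {n : ℕ} {q : ℂ} (hq : q ≠ 0) (f : Fn n) (a b : H n q) :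
    act hq f (a * b) = act hq (act hq f a) b := by
  simp [act]

lemma act_one {n : ℕ} {q : ℂ} (hq : q ≠ 0) (f : Fn n) :
    act hq f (1 : H n q) = f := by
  simp [act]

lemma act_add {n : ℕ} {q : ℂ} (hq : q ≠ 0) (f : Fn n) (a b : H n q) :
    act hq f (a + b) = act hq f a + act hq f b := by
  simp [act]

lemma act_smul {n : ℕ} {q : ℂ} (hq : q ≠ 0) (f : Fn n) (c : ℂ) (a : H n q) :
    act hq f (c • a) = c • act hq f a := by
  simp [act]

lemma act_algebraMap {n : ℕ} {q : ℂ} (hq : q ≠ 0) (f : Fn n) (c : ℂ) :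
    act hq f (algebraMap ℂ (H n q) c) = c • f := by
  rw [Algebra.algebraMap_eq_smul_one, act_smul, act_one]


lemma gen_xx (n : ℕ) (q : ℂ) (i j : Fin n) :
    gen n q (ix i) * gen n q (ix j) = gen n q (ix j) * gen n q (ix i) := by
  have := RingQuot.mkAlgHom_rel ℂ (Rel.xx (q := q) i j)
  simp only [map_mul] at this
  exact this

lemma gen_yy (n : ℕ) (q : ℂ) (i j : Fin n) :
    gen n q (iy i) * gen n q (iy j) = gen n q (iy j) * gen n q (iy i) := by
  have := RingQuot.mkAlgHom_rel ℂ (Rel.yy (q := q) i j)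
  simp only [map_mul] at this
  exact this

lemma gen_zz (n : ℕ) (q : ℂ) (i j : Fin n) :
    gen n q (iz i) * gen n q (iz j) = gen n q (iz j) * gen n q (iz i) := by
  have := RingQuot.mkAlgHom_rel ℂ (Rel.zz (q := q) i j)
  simp only [map_mul] at this
  exact this

lemma gen_xz (n : ℕ) (q : ℂ) (i j : Fin n) :
    gen n q (ix i) * gen n q (iz j) =
      (if i = j then q else 1) • (gen n q (iz j) * gen n q (ix i)) := by
  split_ifs with h
  · subst h
    have := RingQuot.mkAlgHom_rel ℂ (Rel.xz (q := q) i)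
    simp only [map_mul, map_smul] at this
    exact this
  · have := RingQuot.mkAlgHom_rel ℂ (Rel.xzne (q := q) i j h)
    simp only [map_mul] at this
    rw [one_smul]
    exact this

lemma gen_yz (n : ℕ) (q : ℂ) (i j : Fin n) :
    gen n q (iy i) * gen n q (iz j) =
      (if i = j then q⁻¹ else 1) • (gen n q (iz j) * gen n q (iy i)) := by
  split_ifs with h
  · subst h
    have := RingQuot.mkAlgHom_rel ℂ (Rel.yz (q := q) i)
    simp only [map_mul, map_smul] at this
    exact this
  · have := RingQuot.mkAlgHom_rel ℂ (Rel.yzne (q := q) i j h)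
    simp only [map_mul] at this
    rw [one_smul]
    exact this

lemma gen_xy (n : ℕ) (q : ℂ) (i j : Fin n) :
    gen n q (ix i) * gen n q (iy j) =
      (if i = j then q⁻¹ else 1) • (gen n q (iy j) * gen n q (ix i)) +
      (if i = j then (1 : ℂ) else 0) • gen n q (iz i) := by
  split_ifs with h
  · subst h
    have := RingQuot.mkAlgHom_rel ℂ (Rel.xy (q := q) i)
    simp only [map_mul, map_smul, map_add] at this
    rw [one_smul]
    exact this
  · have := RingQuot.mkAlgHom_rel ℂ (Rel.xyne (q := q) i j h)
    simp only [map_mul] at this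
    rw [one_smul, zero_smul, add_zero]
    exact this

/-- inverse forms -/
lemma gen_zx (n : ℕ) (q : ℂ) (hq : q ≠ 0) (i j : Fin n) :
    gen n q (iz j) * gen n q (ix i) =
      (if i = j then q⁻¹ else 1) • (gen n q (ix i) * gen n q (iz j)) := by
  rw [gen_xz, smul_smul]
  split_ifs <;> simp [hq]

lemma gen_zy (n : ℕ) (q : ℂ) (hq : q ≠ 0) (i j : Fin n) :
    gen n q (iz j) * gen n q (iy i) =
      (if i = j then q else 1) • (gen n q (iy i) * gen n q (iz j)) := by
  rw [gen_yz, smul_smul]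
  split_ifs <;> simp [hq]

lemma H_induction {n : ℕ} {q : ℂ} {p : H n q → Prop}
    (h0 : ∀ c, p (algebraMap ℂ (H n q) c)) (hg : ∀ g, p (gen n q g))
    (hadd : ∀ a b, p a → p b → p (a + b)) (hmul : ∀ a b, p a → p b → p (a * b)) (a : H n q) :
    p a := by
  obtain ⟨a, rfl⟩ := RingQuot.mkAlgHom_surjective ℂ (Rel n q) a
  induction a using FreeAlgebra.induction with
  | grade0 r => rw [AlgHom.commutes]; exact h0 r
  | grade1 x => exact hg x
  | mul a b ha hb => rw [map_mul]; exact hmul _ _ ha hb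
  | add a b ha hb => rw [map_add]; exact hadd _ _ ha hb

/-! ### commuting products -/

lemma mon_induction {n : ℕ} {p : (Fin n → ℕ) → Prop} (h0 : p 0)
    (h1 : ∀ b i, p b → p (b + Pi.single i 1)) (b : Fin n → ℕ) : p b := by
  induction h : ∑ i, b i generalizing b with
  | zero =>
    have : b = 0 := by
      ext i
      simpa using (Finset.sum_eq_zero_iff.1 h) i (Finset.mem_univ i)
    rwa [this]
  | succ k ih =>
    obtain ⟨i, -, hi⟩ : ∃ i ∈ Finset.univ, b i ≠ 0 := by
      by_contra! hc
      rw [Finset.sum_eq_zero hc] at h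
      omega
    have hle : Pi.single i 1 ≤ b := by
      intro j
      rcases eq_or_ne j i with rfl | hj
      · rw [Pi.single_eq_same]; exact Nat.one_le_iff_ne_zero.2 hi
      · rw [Pi.single_eq_of_ne hj]; exact Nat.zero_le _
    have hb : b = (b - Pi.single i 1) + Pi.single i 1 := (tsub_add_cancel_of_le hle).symm
    rw [hb]
    apply h1
    apply ih
    rw [hb] at h
    simp only [Pi.add_apply, Finset.sum_add_distrib] at h
    rw [Finset.sum_pi_single'] at h
    simpa using h

section pr
variable {n : ℕ} {A : Type} [Ring A] (u : Fin n → A)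

lemma pr_pairwise (hu : ∀ i j, Commute (u i) (u j)) : _root_.Pairwise fun i j => ∀ (x y : Multiplicative ℕ),
    Commute ((powersHom A (u i)) x) ((powersHom A (u j)) y) := fun i j _ x y => by
  simpa [powersHom_apply] using (hu i j).pow_pow x.toAdd y.toAdd

variable (hu : ∀ i j, Commute (u i) (u j))

/-- ordered monomials in a commuting family -/
def pr (b : Fin n → ℕ) : A :=
  MonoidHom.noncommPiCoprod (fun i => powersHom A (u i)) (pr_pairwise u hu)
    (fun i => Multiplicative.ofAdd (b i))

lemma pr_zero : pr u hu 0 = 1 := by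
  unfold pr
  exact map_one _

lemma pr_add (b c : Fin n → ℕ) : pr u hu (b + c) = pr u hu b * pr u hu c := by
  unfold pr
  rw [← map_mul]
  rfl

lemma pr_single (i : Fin n) : pr u hu (Pi.single i 1) = u i := by
  unfold pr
  have : (fun j => Multiplicative.ofAdd ((Pi.single i 1 : Fin n → ℕ) j)) =
      Pi.mulSingle i (Multiplicative.ofAdd 1) := by
    ext j
    rcases eq_or_ne j i with rfl | hj
    · simp
    · simp [hj]
  rw [this, MonoidHom.noncommPiCoprod_mulSingle]
  simp [powersHom_apply]

lemma pr_succ (b : Fin n → ℕ) (i : Fin n) : pr u hu (b + Pi.single i 1) = pr u hu b * u i := by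
  rw [pr_add, pr_single]

lemma pr_succ' (b : Fin n → ℕ) (i : Fin n) : pr u hu (b + Pi.single i 1) = u i * pr u hu b := by
  rw [add_comm, pr_add, pr_single]

lemma pr_pos (b : Fin n → ℕ) (i : Fin n) (hi : b i ≠ 0) :
    pr u hu b = pr u hu (b - Pi.single i 1) * u i := by
  have hle : Pi.single i 1 ≤ b := by
    intro j
    rcases eq_or_ne j i with rfl | hj
    · rw [Pi.single_eq_same]; exact Nat.one_le_iff_ne_zero.2 hi
    · rw [Pi.single_eq_of_ne hj]; exact Nat.zero_le _
  rw [← pr_succ, tsub_add_cancel_of_le hle]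

lemma pr_qcomm [Algebra ℂ A] (z : A) (hz : ∀ i, ∃ c : ℂ, z * u i = c • (u i * z)) (b : Fin n → ℕ) :
    ∃ c : ℂ, z * pr u hu b = c • (pr u hu b * z) := by
  induction b using mon_induction with
  | h0 => exact ⟨1, by simp [pr_zero]⟩
  | h1 b i ih =>
    obtain ⟨c, hc⟩ := ih
    obtain ⟨d, hd⟩ := hz i
    refine ⟨c * d, ?_⟩
    rw [pr_succ, ← mul_assoc, hc, smul_mul_assoc, mul_assoc, hd, mul_smul_comm, smul_smul,
      mul_assoc]

end pr

lemma cm_x (n : ℕ) (q : ℂ) (i j : Fin n) : Commute (gen n q (ix i)) (gen n q (ix j)) :=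
  gen_xx n q i j
lemma cm_y (n : ℕ) (q : ℂ) (i j : Fin n) : Commute (gen n q (iy i)) (gen n q (iy j)) :=
  gen_yy n q i j
lemma cm_z (n : ℕ) (q : ℂ) (i j : Fin n) : Commute (gen n q (iz i)) (gen n q (iz j)) :=
  gen_zz n q i j

/-- PBW monomials in `y`, in `x`, in `z`. -/
def prY (n : ℕ) (q : ℂ) (b : Fin n → ℕ) : H n q := pr (fun i => gen n q (iy i)) (cm_y n q) b
def prX (n : ℕ) (q : ℂ) (b : Fin n → ℕ) : H n q := pr (fun i => gen n q (ix i)) (cm_x n q) b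
def prZ (n : ℕ) (q : ℂ) (b : Fin n → ℕ) : H n q := pr (fun i => gen n q (iz i)) (cm_z n q) b


lemma prX_zero (n : ℕ) (q : ℂ) : prX n q 0 = 1 := pr_zero _ _
lemma prX_succ (n : ℕ) (q : ℂ) (b : Fin n → ℕ) (i : Fin n) :
    prX n q (b + Pi.single i 1) = prX n q b * gen n q (ix i) :=
  pr_succ (fun i => gen n q (ix i)) (cm_x n q) b i
lemma prX_succ' (n : ℕ) (q : ℂ) (b : Fin n → ℕ) (i : Fin n) :
    prX n q (b + Pi.single i 1) = gen n q (ix i) * prX n q b :=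
  pr_succ' (fun i => gen n q (ix i)) (cm_x n q) b i
lemma prX_pos (n : ℕ) (q : ℂ) (b : Fin n → ℕ) (i : Fin n) (hi : b i ≠ 0) :
    prX n q b = prX n q (b - Pi.single i 1) * gen n q (ix i) :=
  pr_pos (fun i => gen n q (ix i)) (cm_x n q) b i hi

lemma prY_zero (n : ℕ) (q : ℂ) : prY n q 0 = 1 := pr_zero _ _
lemma prY_succ (n : ℕ) (q : ℂ) (b : Fin n → ℕ) (i : Fin n) :
    prY n q (b + Pi.single i 1) = prY n q b * gen n q (iy i) :=
  pr_succ (fun i => gen n q (iy i)) (cm_y n q) b i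
lemma prY_succ' (n : ℕ) (q : ℂ) (b : Fin n → ℕ) (i : Fin n) :
    prY n q (b + Pi.single i 1) = gen n q (iy i) * prY n q b :=
  pr_succ' (fun i => gen n q (iy i)) (cm_y n q) b i
lemma prY_pos (n : ℕ) (q : ℂ) (b : Fin n → ℕ) (i : Fin n) (hi : b i ≠ 0) :
    prY n q b = prY n q (b - Pi.single i 1) * gen n q (iy i) :=
  pr_pos (fun i => gen n q (iy i)) (cm_y n q) b i hi

lemma prZ_zero (n : ℕ) (q : ℂ) : prZ n q 0 = 1 := pr_zero _ _
lemma prZ_succ (n : ℕ) (q : ℂ) (b : Fin n → ℕ) (i : Fin n) :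
    prZ n q (b + Pi.single i 1) = prZ n q b * gen n q (iz i) :=
  pr_succ (fun i => gen n q (iz i)) (cm_z n q) b i
lemma prZ_succ' (n : ℕ) (q : ℂ) (b : Fin n → ℕ) (i : Fin n) :
    prZ n q (b + Pi.single i 1) = gen n q (iz i) * prZ n q b :=
  pr_succ' (fun i => gen n q (iz i)) (cm_z n q) b i
lemma prZ_pos (n : ℕ) (q : ℂ) (b : Fin n → ℕ) (i : Fin n) (hi : b i ≠ 0) :
    prZ n q b = prZ n q (b - Pi.single i 1) * gen n q (iz i) :=
  pr_pos (fun i => gen n q (iz i)) (cm_z n q) b i hi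

/-- PBW monomials. -/
def pbw (n : ℕ) (q : ℂ) (m : Mon n) : H n q :=
  prY n q (fun i => m (iy i)) * prX n q (fun i => m (ix i)) * prZ n q (fun i => m (iz i))

/-- assemble an exponent vector -/
def asm {n : ℕ} (b a c : Fin n → ℕ) : Mon n := Sum.elim a (Sum.elim b c)

lemma pbw_asm (n : ℕ) (q : ℂ) (b a c : Fin n → ℕ) :
    pbw n q (asm b a c) = prY n q b * prX n q a * prZ n q c := rfl

lemma prY_mul_x (n : ℕ) (q : ℂ) (hq : q ≠ 0) (i : Fin n) (b : Fin n → ℕ) :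
    ∃ c : ℂ, ∃ w ∈ Submodule.span ℂ (Set.range (prY n q)),
      gen n q (ix i) * prY n q b = c • (prY n q b * gen n q (ix i)) + w * gen n q (iz i) := by
  induction b using mon_induction with
  | h0 => exact ⟨1, 0, Submodule.zero_mem _, by simp [prY_zero]⟩
  | h1 b j ih =>
    obtain ⟨c, w, hw, h⟩ := ih
    have hs : prY n q (b + Pi.single j 1) = prY n q b * gen n q (iy j) := prY_succ _ _ _ _
    refine ⟨c * (if i = j then q⁻¹ else 1), (c * (if i = j then (1 : ℂ) else 0)) • prY n q b +
      (if j = i then q else 1) • (w * gen n q (iy j)), ?_, ?_⟩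
    · refine Submodule.add_mem _ (Submodule.smul_mem _ _ (Submodule.subset_span ⟨b, rfl⟩))
        (Submodule.smul_mem _ _ ?_)
      clear h
      induction hw using Submodule.span_induction with
      | mem x hx =>
        obtain ⟨b', rfl⟩ := hx
        exact Submodule.subset_span ⟨b' + Pi.single j 1, prY_succ _ _ _ _⟩
      | zero => rw [zero_mul]; exact Submodule.zero_mem _
      | add x y _ _ hx hy => rw [add_mul]; exact Submodule.add_mem _ hx hy
      | smul r x _ hx => rw [smul_mul_assoc]; exact Submodule.smul_mem _ _ hx
    · rw [hs, ← mul_assoc, h, add_mul, smul_mul_assoc, mul_assoc, gen_xy, mul_assoc w, gen_zy _ _ hq]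
      simp only [mul_add, add_mul, smul_add, smul_mul_assoc, mul_smul_comm, smul_smul, mul_assoc]
      rw [add_assoc]

/-- the span of the PBW monomials -/
def U (n : ℕ) (q : ℂ) : Submodule ℂ (H n q) := Submodule.span ℂ (Set.range (pbw n q))

lemma z_mul_pbw' (n : ℕ) (q : ℂ) (hq : q ≠ 0) (i : Fin n) (a c : Fin n → ℕ) :
    ∃ r : ℂ, gen n q (iz i) * (prX n q a * prZ n q c) =
      r • (prX n q a * prZ n q (c + Pi.single i 1)) := by
  obtain ⟨r, hr⟩ := pr_qcomm (fun i => gen n q (ix i)) (cm_x n q) (gen n q (iz i))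
    (fun j => ⟨_, gen_zx n q hq j i⟩) a
  refine ⟨r, ?_⟩
  rw [← mul_assoc]
  change gen n q (iz i) * prX n q a = r • (prX n q a * gen n q (iz i)) at hr
  rw [hr, prZ_succ', smul_mul_assoc, mul_assoc]

lemma w_mul_mem (n : ℕ) (q : ℂ) (a c : Fin n → ℕ) (w : H n q)
    (hw : w ∈ Submodule.span ℂ (Set.range (prY n q))) :
    w * (prX n q a * prZ n q c) ∈ U n q := by
  induction hw using Submodule.span_induction with
  | mem x hx =>
    obtain ⟨b, rfl⟩ := hx
    exact Submodule.subset_span ⟨asm b a c, by rw [pbw_asm, mul_assoc]⟩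
  | zero => rw [zero_mul]; exact Submodule.zero_mem _
  | add x y _ _ hx hy => rw [add_mul]; exact Submodule.add_mem _ hx hy
  | smul r x _ hx => rw [smul_mul_assoc]; exact Submodule.smul_mem _ _ hx

lemma gen_mul_pbw (n : ℕ) (q : ℂ) (hq : q ≠ 0) (g : GenIdx n) (b a c : Fin n → ℕ) :
    gen n q g * (prY n q b * (prX n q a * prZ n q c)) ∈ U n q := by
  have hb : ∀ b, prY n q b ∈ Submodule.span ℂ (Set.range (prY n q)) :=
    fun b => Submodule.subset_span ⟨b, rfl⟩
  rcases g with i | i | i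
  · obtain ⟨r, w, hw, h⟩ := prY_mul_x n q hq i b
    obtain ⟨s, hs⟩ := z_mul_pbw' n q hq i a c
    rw [← mul_assoc, h, add_mul, mul_assoc w, hs, smul_mul_assoc, mul_smul_comm]
    refine Submodule.add_mem _ (Submodule.smul_mem _ _ ?_)
      (Submodule.smul_mem _ _ (w_mul_mem _ _ _ _ _ hw))
    have : gen n q (ix i) * prX n q a = prX n q (a + Pi.single i 1) := (prX_succ' _ _ _ _).symm
    rw [mul_assoc, ← mul_assoc (gen n q _), this]
    exact w_mul_mem _ _ _ _ _ (hb b)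
  · have : gen n q (iy i) * prY n q b = prY n q (b + Pi.single i 1) := (prY_succ' _ _ _ _).symm
    rw [← mul_assoc, this]
    exact w_mul_mem _ _ _ _ _ (hb _)
  · obtain ⟨r, hr⟩ := pr_qcomm (fun i => gen n q (iy i)) (cm_y n q) (gen n q (iz i))
      (fun j => ⟨_, gen_zy n q hq j i⟩) b
    obtain ⟨s, hs⟩ := z_mul_pbw' n q hq i a c
    change gen n q (iz i) * prY n q b = r • (prY n q b * gen n q (iz i)) at hr
    rw [← mul_assoc, hr, smul_mul_assoc, mul_assoc, hs, mul_smul_comm]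
    exact Submodule.smul_mem _ _ (Submodule.smul_mem _ _ (w_mul_mem _ _ _ _ _ (hb b)))

lemma mul_mem_U (n : ℕ) (q : ℂ) (hq : q ≠ 0) (a : H n q) : ∀ u ∈ U n q, a * u ∈ U n q := by
  induction a using H_induction with
  | h0 c =>
    intro u hu
    rw [← Algebra.smul_def]
    exact Submodule.smul_mem _ _ hu
  | hg g =>
    intro u hu
    induction hu using Submodule.span_induction with
    | mem x hx =>
      obtain ⟨m, rfl⟩ := hx
      unfold pbw
      rw [mul_assoc (prY n q _)]
      exact gen_mul_pbw n q hq g _ _ _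
    | zero => rw [mul_zero]; exact Submodule.zero_mem _
    | add x y _ _ hx hy => rw [mul_add]; exact Submodule.add_mem _ hx hy
    | smul r x _ hx => rw [mul_smul_comm]; exact Submodule.smul_mem _ _ hx
  | hadd a b ha hb =>
    intro u hu
    rw [add_mul]
    exact Submodule.add_mem _ (ha u hu) (hb u hu)
  | hmul a b ha hb =>
    intro u hu
    rw [mul_assoc]
    exact ha _ (hb u hu)

lemma mem_U (n : ℕ) (q : ℂ) (hq : q ≠ 0) (a : H n q) : a ∈ U n q := by
  rw [← mul_one a]
  refine mul_mem_U n q hq a _ (Submodule.subset_span ⟨0, ?_⟩)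
  change prY n q 0 * prX n q 0 * prZ n q 0 = _
  rw [prY_zero, prX_zero, prZ_zero, one_mul, one_mul]

/-! ### action on PBW monomials -/

lemma asm_succ_y {n : ℕ} (b a c : Fin n → ℕ) (i : Fin n) :
    asm (b + Pi.single i 1) a c = asm b a c + dl (iy i) := by
  ext (j | j | j) <;> simp [asm, dl_apply, Pi.single_apply]

lemma asm_succ_x {n : ℕ} (b a c : Fin n → ℕ) (i : Fin n) :
    asm b (a + Pi.single i 1) c = asm b a c + dl (ix i) := by
  ext (j | j | j) <;> simp [asm, dl_apply, Pi.single_apply]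

lemma asm_succ_z {n : ℕ} (b a c : Fin n → ℕ) (i : Fin n) :
    asm b a (c + Pi.single i 1) = asm b a c + dl (iz i) := by
  ext (j | j | j) <;> simp [asm, dl_apply, Pi.single_apply]

lemma act_prY {n : ℕ} {q : ℂ} (hq : q ≠ 0) (f : Fn n) (b : Fin n → ℕ) : ∀ b' a c,
    act hq f (prY n q b) (asm b' a c) = f (asm (b' + b) a c) := by
  induction b using mon_induction with
  | h0 => intro b' a c; simp [prY_zero, act_one]
  | h1 b i ih =>
    intro b' a c
    have hs : prY n q (b + Pi.single i 1) = prY n q b * gen n q (iy i) := prY_succ _ _ _ _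
    rw [hs, act_mul, act_gen]
    change opY n i _ _ = _
    rw [opY_apply, ← asm_succ_y, ih, add_assoc, add_comm b]

lemma act_prX {n : ℕ} {q : ℂ} (hq : q ≠ 0) (f : Fn n) (b : Fin n → ℕ) : ∀ a c,
    act hq f (prX n q b) (asm 0 a c) = f (asm 0 (a + b) c) := by
  induction b using mon_induction with
  | h0 => intro a c; simp [prX_zero, act_one]
  | h1 b i ih =>
    intro a c
    have hs : prX n q (b + Pi.single i 1) = prX n q b * gen n q (ix i) := prX_succ _ _ _ _
    rw [hs, act_mul, act_gen]
    change opX n q i _ _ = _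
    have h0 : asm 0 a c (iy i) = 0 := rfl
    rw [opX_apply, ← asm_succ_x, ih, add_assoc, add_comm b, h0]
    simp [sq]

lemma act_prZ {n : ℕ} {q : ℂ} (hq : q ≠ 0) (f : Fn n) (b : Fin n → ℕ) : ∀ c,
    act hq f (prZ n q b) (asm 0 0 c) = f (asm 0 0 (c + b)) := by
  induction b using mon_induction with
  | h0 => intro c; simp [prZ_zero, act_one]
  | h1 b i ih =>
    intro c
    have hs : prZ n q (b + Pi.single i 1) = prZ n q b * gen n q (iz i) := prZ_succ _ _ _ _
    rw [hs, act_mul, act_gen]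
    change opZ n q i _ _ = _
    have h0 : asm 0 0 c (iy i) = 0 := rfl
    have h1 : asm 0 0 c (ix i) = 0 := rfl
    rw [opZ_apply, ← asm_succ_z, ih, add_assoc, add_comm b, h0, h1]
    simp

lemma act_pbw {n : ℕ} {q : ℂ} (hq : q ≠ 0) (f : Fn n) (m : Mon n) :
    act hq f (pbw n q m) 0 = f m := by
  have h0 : (0 : Mon n) = asm 0 0 0 := by ext (j | j | j) <;> rfl
  have hm : m = asm (fun i => m (iy i)) (fun i => m (ix i)) (fun i => m (iz i)) := by
    ext (j | j | j) <;> rfl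
  conv_rhs => rw [hm]
  rw [h0, pbw, act_mul, act_mul, act_prZ, act_prX, act_prY, zero_add, zero_add, zero_add]


/-! ### the chain of ideals -/

/-- the order in which the generators are killed: `z`, then `x`, then `y`. -/
def ord {n : ℕ} : GenIdx n → ℕ
  | Sum.inl i => n + i
  | Sum.inr (Sum.inl i) => 2 * n + i
  | Sum.inr (Sum.inr i) => i

lemma ord_x {n : ℕ} (i : Fin n) : ord (ix i) = n + i := rfl
lemma ord_y {n : ℕ} (i : Fin n) : ord (iy i) = 2 * n + i := rfl
lemma ord_z {n : ℕ} (i : Fin n) : ord (iz i) = i := rfl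

lemma ord_lt {n : ℕ} (g : GenIdx n) : ord g < 3 * n := by
  rcases g with i | i | i
  · change n + (i : ℕ) < _; omega
  · change 2 * n + (i : ℕ) < _; omega
  · change (i : ℕ) < _; omega

lemma ord_surj {n : ℕ} (k : ℕ) (hk : k < 3 * n) : ∃ g : GenIdx n, ord g = k := by
  by_cases h1 : k < n
  · exact ⟨iz ⟨k, h1⟩, rfl⟩
  by_cases h2 : k < 2 * n
  · exact ⟨ix ⟨k - n, by omega⟩, by rw [ord_x]; simp; omega⟩
  · exact ⟨iy ⟨k - 2 * n, by omega⟩, by rw [ord_y]; simp; omega⟩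

lemma ord_inj {n : ℕ} {g h : GenIdx n} (e : ord g = ord h) : g = h := by
  rcases g with i | i | i <;> rcases h with j | j | j <;>
    simp only [ord, Sum.inl.injEq, Sum.inr.injEq, reduceCtorEq, Fin.ext_iff] at e ⊢ <;> omega

/-- the left ideal generated by the first `k` generators -/
def I (n : ℕ) (q : ℂ) (k : ℕ) : Ideal (H n q) := Ideal.span (gen n q '' {g | ord g < k})

lemma gen_mem_I {n : ℕ} {q : ℂ} {k : ℕ} {g : GenIdx n} (h : ord g < k) : gen n q g ∈ I n q k :=
  Ideal.subset_span ⟨g, h, rfl⟩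

lemma I_mono {n : ℕ} {q : ℂ} {k l : ℕ} (h : k ≤ l) : I n q k ≤ I n q l :=
  Ideal.span_mono (Set.image_mono fun _ hg => lt_of_lt_of_le hg h)

lemma I_smul {n : ℕ} {q : ℂ} {k : ℕ} (c : ℂ) {a : H n q} (h : a ∈ I n q k) : c • a ∈ I n q k := by
  rw [Algebra.smul_def]; exact Ideal.mul_mem_left _ _ h

lemma qcomm {n : ℕ} {q : ℂ} (hq : q ≠ 0) (g h : GenIdx n) : ∃ c : ℂ,
    gen n q g * gen n q h - c • (gen n q h * gen n q g) ∈ I n q (ord g) := by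
  have key : ∀ c : ℂ, gen n q g * gen n q h = c • (gen n q h * gen n q g) → ∃ c : ℂ,
      gen n q g * gen n q h - c • (gen n q h * gen n q g) ∈ I n q (ord g) := fun c hc =>
    ⟨c, by rw [hc, sub_self]; exact Submodule.zero_mem _⟩
  rcases g with i | i | i <;> rcases h with j | j | j
  · exact key 1 (by rw [one_smul]; exact gen_xx n q i j)
  · refine ⟨if i = j then q⁻¹ else 1, ?_⟩
    · rw [gen_xy, add_sub_cancel_left]
      exact I_smul _ (gen_mem_I (by rw [ord_x, ord_z]; have := i.2; omega))
  · exact key _ (gen_xz n q i j)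
  · refine ⟨if j = i then q else 1, ?_⟩
    have h := gen_xy n q j i
    have hz : gen n q (iz j) ∈ I n q (ord (iy i)) :=
      gen_mem_I (by rw [ord_y, ord_z]; have := j.2; omega)
    split_ifs at h ⊢ with hji
    · have : gen n q (iy i) * gen n q (ix j) - q • (gen n q (ix j) * gen n q (iy i)) =
          -(q • gen n q (iz j)) := by
        rw [h, smul_add, smul_smul, mul_inv_cancel₀ hq, one_smul, one_smul]; abel
      change gen n q (iy i) * gen n q (ix j) - q • (gen n q (ix j) * gen n q (iy i)) ∈ _
      rw [this]; exact Submodule.neg_mem _ (I_smul _ hz)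
    · change gen n q (iy i) * gen n q (ix j) - (1 : ℂ) • (gen n q (ix j) * gen n q (iy i)) ∈ _
      rw [h, one_smul, one_smul, zero_smul, add_zero, sub_self]
      exact Submodule.zero_mem _
  · exact key 1 (by rw [one_smul]; exact gen_yy n q i j)
  · exact key _ (gen_yz n q i j)
  · exact key _ (gen_zx n q hq j i)
  · exact key _ (gen_zy n q hq j i)
  · exact key 1 (by rw [one_smul]; exact gen_zz n q i j)

lemma I_mul_gen {n : ℕ} {q : ℂ} (hq : q ≠ 0) {k : ℕ} {a : H n q} (h : a ∈ I n q k)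
    (g : GenIdx n) : a * gen n q g ∈ I n q k := by
  induction h using Submodule.span_induction with
  | mem x hx =>
    obtain ⟨h, hh, rfl⟩ := hx
    obtain ⟨c, hc⟩ := qcomm hq h g
    have := Submodule.add_mem _ (I_mono (le_of_lt hh) hc)
      (I_smul c (Ideal.mul_mem_left _ (gen n q g) (gen_mem_I (q := q) hh)))
    rwa [sub_add_cancel] at this
  | zero => rw [zero_mul]; exact Submodule.zero_mem _
  | add x y _ _ hx hy => rw [add_mul]; exact Submodule.add_mem _ hx hy
  | smul r x _ hx => rw [smul_mul_assoc]; exact Submodule.smul_mem _ _ hx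

lemma I_mul {n : ℕ} {q : ℂ} (hq : q ≠ 0) {k : ℕ} (b : H n q) :
    ∀ a ∈ I n q k, a * b ∈ I n q k := by
  induction b using H_induction with
  | h0 c => intro a ha; rw [← Algebra.commutes, ← Algebra.smul_def]; exact I_smul c ha
  | hg g => exact fun a ha => I_mul_gen hq ha g
  | hadd b c hb hc => intro a ha; rw [mul_add]; exact Submodule.add_mem _ (hb a ha) (hc a ha)
  | hmul b c hb hc => intro a ha; rw [← mul_assoc]; exact hc _ (hb a ha)

/-- monomials involving one of the first `k` generators -/
def Bad {n : ℕ} (k : ℕ) (m : Mon n) : Prop := ∃ h, ord h < k ∧ m h ≠ 0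

lemma bad_mem {n : ℕ} {q : ℂ} (hq : q ≠ 0) {k : ℕ} {m : Mon n} (hm : Bad k m) :
    pbw n q m ∈ I n q k := by
  obtain ⟨h, hk, h0⟩ := hm
  have hg := gen_mem_I (q := q) hk
  unfold pbw
  rcases h with i | i | i
  · rw [prX_pos n q (fun i => m (ix i)) i h0]
    exact I_mul hq _ _ (Ideal.mul_mem_left _ _ (Ideal.mul_mem_left _ _ hg))
  · rw [prY_pos n q (fun i => m (iy i)) i h0]
    exact I_mul hq _ _ (I_mul hq _ _ (Ideal.mul_mem_left _ _ hg))
  · rw [prZ_pos n q (fun i => m (iz i)) i h0]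
    exact (Ideal.mul_mem_left _ _ (Ideal.mul_mem_left _ _ hg))

lemma asm_eta {n : ℕ} (m : Mon n) :
    asm (fun i => m (iy i)) (fun i => m (ix i)) (fun i => m (iz i)) = m := by
  ext (j | j | j) <;> rfl

lemma good_mul {n : ℕ} {q : ℂ} {m : Mon n} {g : GenIdx n} (hm : ¬ Bad (ord g) m) :
    pbw n q m * gen n q g = pbw n q (m + dl g) := by
  have hm' : ∀ h, ord h < ord g → m h = 0 := by
    intro h hh; by_contra h0; exact hm ⟨h, hh, h0⟩
  rw [← asm_eta m]
  rcases g with i | i | i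
  · have hz : (fun i => m (iz i)) = 0 := by
      ext j; exact hm' _ (by change (j : ℕ) < n + _; omega)
    change _ = pbw n q (_ + dl (ix i))
    rw [hz, ← asm_succ_x, pbw_asm, pbw_asm, prX_succ, prZ_zero]
    simp [mul_assoc]
  · have hz : (fun i => m (iz i)) = 0 := by
      ext j; exact hm' _ (by change (j : ℕ) < 2 * n + _; omega)
    have hx : (fun i => m (ix i)) = 0 := by
      ext j; exact hm' _ (by change n + (j : ℕ) < 2 * n + _; omega)
    change _ = pbw n q (_ + dl (iy i))
    rw [hz, hx, ← asm_succ_y, pbw_asm, pbw_asm, prY_succ, prZ_zero, prX_zero]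
    simp
  · change _ = pbw n q (_ + dl (iz i))
    rw [← asm_succ_z, pbw_asm, pbw_asm, prZ_succ]
    simp [mul_assoc]

lemma bad_add {n : ℕ} {k : ℕ} {m : Mon n} (hm : Bad k m) (m' : Mon n) : Bad k (m + m') := by
  obtain ⟨h, hk, h0⟩ := hm
  exact ⟨h, hk, by simp [h0]⟩

lemma bad_swap {n : ℕ} {k : ℕ} {m : Mon n} (hm : Bad k m) (i : Fin n) :
    Bad k (m - dl (iy i) + dl (iz i)) := by
  obtain ⟨h, hk, h0⟩ := hm
  by_cases hh : h = iy i
  · subst hh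
    refine ⟨iz i, ?_, by simp [dl_apply]⟩
    rw [ord_y] at hk; rw [ord_z]; omega
  · exact ⟨h, hk, by simp [dl_apply, hh, h0]⟩

lemma act_vanish {n : ℕ} {q : ℂ} (hq : q ≠ 0) {k : ℕ} (a : H n q) : ∀ f : Fn n,
    (∀ m, Bad k m → f m = 0) → ∀ m, Bad k m → act hq f a m = 0 := by
  induction a using H_induction with
  | h0 c => intro f hf m hm; rw [act_algebraMap]; simp [hf m hm]
  | hg g =>
    intro f hf m hm
    rw [act_gen]
    rcases g with i | i | i
    · change opX n q i f m = 0
      rw [opX_apply, hf _ (bad_add hm _), hf _ (bad_swap hm _)]; simp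
    · change opY n i f m = 0
      rw [opY_apply, hf _ (bad_add hm _)]
    · change opZ n q i f m = 0
      rw [opZ_apply, hf _ (bad_add hm _)]; simp
  | hadd a b ha hb => intro f hf m hm; rw [act_add]; simp [ha f hf m hm, hb f hf m hm]
  | hmul a b ha hb => intro f hf m hm; rw [act_mul]; exact hb _ (ha f hf) m hm

lemma act_I {n : ℕ} {q : ℂ} (hq : q ≠ 0) {k : ℕ} (f : Fn n)
    (hf : ∀ m, Bad k m → f m = 0) {a : H n q} (ha : a ∈ I n q k) : act hq f a 0 = 0 := by
  have aux : ∀ g : GenIdx n, ord g < k → ∀ f : Fn n, (∀ m, Bad k m → f m = 0) →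
      act hq f (gen n q g) 0 = 0 := by
    intro g hg f hf
    have hb : Bad k (dl g) := ⟨g, hg, by simp [dl_apply]⟩
    rw [act_gen]
    rcases g with i | i | i
    · change opX n q i f 0 = 0
      rw [opX_apply, zero_add, hf _ hb]; simp [sq]
    · change opY n i f 0 = 0
      rw [opY_apply, zero_add, hf _ hb]
    · change opZ n q i f 0 = 0
      rw [opZ_apply, zero_add, hf _ hb]; simp
  induction ha using Submodule.span_induction generalizing f with
  | mem x hx => obtain ⟨h, hh, rfl⟩ := hx; exact aux h hh f hf
  | zero => simp [act]
  | add x y _ _ hx hy => rw [act_add]; simp [hx f hf, hy f hf]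
  | smul r x _ hx => rw [smul_eq_mul, act_mul]; exact hx _ (act_vanish hq r f hf)

lemma star {n : ℕ} {q : ℂ} (hq : q ≠ 0) (g : GenIdx n) (a : H n q)
    (h : a * gen n q g ∈ I n q (ord g)) : a ∈ I n q (ord g) := by
  classical
  obtain ⟨c, rfl⟩ := Finsupp.mem_span_range_iff_exists_finsupp.1 (mem_U n q hq a)
  have hgood : ∀ m, ¬ Bad (ord g) m → c m = 0 := by
    intro m0 hm0
    have hbad : ¬ Bad (ord g) (m0 + dl g) := by
      rintro ⟨h, hk, h0⟩
      refine hm0 ⟨h, hk, ?_⟩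
      have : h ≠ g := by rintro rfl; exact lt_irrefl _ hk
      simpa [dl_apply, this] using h0
    have h1 := act_I hq (Pi.single (m0 + dl g) 1 : Fn n) (by
      intro m hm
      rw [Pi.single_eq_of_ne]
      rintro rfl; exact hbad hm) h
    let L : H n q →ₗ[ℂ] ℂ :=
      { toFun := fun a => act hq (Pi.single (m0 + dl g) 1 : Fn n) (a * gen n q g) 0
        map_add' := fun a b => by rw [add_mul, act_add]; rfl
        map_smul' := fun r a => by rw [smul_mul_assoc, act_smul]; rfl }
    change L (c.sum fun i a => a • pbw n q i) = 0 at h1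
    rw [map_finsuppSum, Finsupp.sum, Finset.sum_eq_single m0] at h1
    · rw [map_smul] at h1
      change c m0 * act hq _ (pbw n q m0 * gen n q g) 0 = 0 at h1
      rw [good_mul hm0, act_pbw, Pi.single_eq_same, mul_one] at h1
      exact h1
    · intro m _ hm
      rw [map_smul]
      change c m * act hq _ (pbw n q m * gen n q g) 0 = 0
      by_cases hb : Bad (ord g) m
      · rw [act_I hq _ _ (I_mul hq _ _ (bad_mem hq hb)), mul_zero]
        intro m hm
        rw [Pi.single_eq_of_ne]
        rintro rfl; exact hbad hm
      · rw [good_mul hb, act_pbw, Pi.single_eq_of_ne, mul_zero]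
        intro e; exact hm (add_right_cancel e)
    · intro hn
      rw [Finsupp.notMem_support_iff.1 hn, zero_smul, map_zero]
  refine Submodule.sum_mem _ fun m _ => ?_
  by_cases hb : Bad (ord g) m
  · exact I_smul _ (bad_mem hq hb)
  · change c m • pbw n q m ∈ _
    rw [hgood m hb, zero_smul]; exact Submodule.zero_mem _

/-! ### the chain of modules -/

/-- the quotient by the first `k` generators -/
abbrev Q (n : ℕ) (q : ℂ) (k : ℕ) : Type := H n q ⧸ I n q k

/-- right multiplication -/
def rmul {n : ℕ} {q : ℂ} (hq : q ≠ 0) (k : ℕ) (b : H n q) : Q n q k →ₗ[H n q] Q n q k :=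
  Submodule.mapQ (I n q k) (I n q k) (LinearMap.toSpanSingleton (H n q) (H n q) b)
    (fun a ha => I_mul hq b a ha)

lemma rmul_mk {n : ℕ} {q : ℂ} (hq : q ≠ 0) (k : ℕ) (b a : H n q) :
    rmul hq k b (Submodule.Quotient.mk a) = Submodule.Quotient.mk (a * b) := rfl

/-- the projections -/
def prj (n : ℕ) (q : ℂ) (k : ℕ) : Q n q k →ₗ[H n q] Q n q (k + 1) :=
  Submodule.mapQ (I n q k) (I n q (k + 1)) LinearMap.id (I_mono (Nat.le_succ k))

lemma prj_mk {n : ℕ} {q : ℂ} (k : ℕ) (a : H n q) :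
    prj n q k (Submodule.Quotient.mk a) = Submodule.Quotient.mk a := rfl

/-- the modules in the chain -/
def MM (n : ℕ) (q : ℂ) (k : ℕ) : ModuleCat.{0} (H n q) := ModuleCat.of (H n q) (Q n q k)

def rho {n : ℕ} {q : ℂ} (hq : q ≠ 0) (k : ℕ) (b : H n q) : MM n q k ⟶ MM n q k :=
  ModuleCat.ofHom (rmul hq k b)

def ppi (n : ℕ) (q : ℂ) (k : ℕ) : MM n q k ⟶ MM n q (k + 1) := ModuleCat.ofHom (prj n q k)

lemma mem_I_succ {n : ℕ} {q : ℂ} (g : GenIdx n) (a : H n q) (ha : a ∈ I n q (ord g + 1)) :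
    ∃ b, a - b * gen n q g ∈ I n q (ord g) := by
  have hs : {h : GenIdx n | ord h < ord g + 1} = insert g {h | ord h < ord g} := by
    ext h
    simp only [Set.mem_ofPred_eq, Set.mem_insert_iff]
    constructor
    · intro hh
      rcases Nat.lt_succ_iff_lt_or_eq.1 hh with h1 | h1
      · exact Or.inr h1
      · exact Or.inl (ord_inj h1)
    · rintro (rfl | h1) <;> omega
  unfold I at ha
  rw [hs, Set.image_insert_eq] at ha
  obtain ⟨b, z, hz, rfl⟩ := Submodule.mem_span_insert.1 ha
  refine ⟨b, ?_⟩
  rw [smul_eq_mul, add_sub_cancel_left]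
  exact hz

lemma rho_ppi {n : ℕ} {q : ℂ} (hq : q ≠ 0) (g : GenIdx n) :
    rho hq (ord g) (gen n q g) ≫ ppi n q (ord g) = 0 := by
  apply ModuleCat.hom_ext
  apply LinearMap.ext
  intro a
  obtain ⟨a, rfl⟩ := Submodule.Quotient.mk_surjective _ a
  change (Submodule.Quotient.mk (a * gen n q g) : Q n q (ord g + 1)) = 0
  rw [Submodule.Quotient.mk_eq_zero]
  exact Ideal.mul_mem_left _ _ (gen_mem_I (Nat.lt_succ_self _))

lemma rho_exact {n : ℕ} {q : ℂ} (hq : q ≠ 0) (g : GenIdx n) :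
    (ShortComplex.mk _ _ (rho_ppi hq g)).ShortExact := by
  have hm : Mono (rho hq (ord g) (gen n q g)) := by
    rw [ModuleCat.mono_iff_injective]
    change Function.Injective (rmul hq (ord g) (gen n q g))
    rw [injective_iff_map_eq_zero]
    intro a ha
    obtain ⟨a, rfl⟩ := Submodule.Quotient.mk_surjective _ a
    rw [rmul_mk, Submodule.Quotient.mk_eq_zero] at ha
    rw [Submodule.Quotient.mk_eq_zero]
    exact star hq g a ha
  have he : Epi (ppi n q (ord g)) := by
    rw [ModuleCat.epi_iff_surjective]
    intro a
    obtain ⟨a, rfl⟩ := Submodule.Quotient.mk_surjective _ a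
    exact ⟨Submodule.Quotient.mk a, rfl⟩
  refine { exact := ?_, mono_f := hm, epi_g := he }
  rw [ShortComplex.moduleCat_exact_iff]
  intro a ha
  obtain ⟨a, rfl⟩ := Submodule.Quotient.mk_surjective _ a
  change (Submodule.Quotient.mk a : Q n q (ord g + 1)) = 0 at ha
  rw [Submodule.Quotient.mk_eq_zero] at ha
  obtain ⟨b, hb⟩ := mem_I_succ g a ha
  refine ⟨Submodule.Quotient.mk b, ?_⟩
  change (Submodule.Quotient.mk (b * gen n q g) : Q n q (ord g)) = Submodule.Quotient.mk a
  symm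
  rw [Submodule.Quotient.eq]
  exact hb

lemma rho_theta {n : ℕ} {q : ℂ} (hq : q ≠ 0) (g h : GenIdx n) (c : ℂ) : ∃ c' : ℂ,
    rho hq (ord g) (gen n q g) ≫ rho hq (ord g) (c • gen n q h) =
      rho hq (ord g) (c' • gen n q h) ≫ rho hq (ord g) (gen n q g) := by
  obtain ⟨d, hd⟩ := qcomm hq g h
  refine ⟨c * d, ?_⟩
  apply ModuleCat.hom_ext
  apply LinearMap.ext
  intro a
  obtain ⟨a, rfl⟩ := Submodule.Quotient.mk_surjective _ a
  change (Submodule.Quotient.mk (a * gen n q g * (c • gen n q h)) : Q n q (ord g)) =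
    Submodule.Quotient.mk (a * ((c * d) • gen n q h) * gen n q g)
  rw [Submodule.Quotient.eq]
  have : a * gen n q g * (c • gen n q h) - a * ((c * d) • gen n q h) * gen n q g =
      c • (a * (gen n q g * gen n q h - d • (gen n q h * gen n q g))) := by
    simp only [mul_sub, smul_sub, mul_smul_comm, smul_mul_assoc, smul_smul, mul_assoc]
  rw [this]
  exact I_smul _ (Ideal.mul_mem_left _ _ hd)

lemma theta_ppi {n : ℕ} {q : ℂ} (hq : q ≠ 0) (k : ℕ) (b : H n q) :
    rho hq k b ≫ ppi n q k = ppi n q k ≫ rho hq (k + 1) b := by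
  apply ModuleCat.hom_ext
  apply LinearMap.ext
  intro a
  obtain ⟨a, rfl⟩ := Submodule.Quotient.mk_surjective _ a
  rfl

lemma eps_gen (n : ℕ) (q : ℂ) (g : GenIdx n) : eps n q (gen n q g) = 0 := by
  simp [eps, gen]

lemma I_zero (n : ℕ) (q : ℂ) : I n q 0 = ⊥ := by
  simp [I]

lemma eps_I {n : ℕ} {q : ℂ} {k : ℕ} {a : H n q} (ha : a ∈ I n q k) : eps n q a = 0 := by
  induction ha using Submodule.span_induction with
  | mem x hx => obtain ⟨h, hh, rfl⟩ := hx; exact eps_gen n q h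
  | zero => simp
  | add x y _ _ hx hy => simp [hx, hy]
  | smul r x _ hx => simp [hx]

lemma sub_eps_mem {n : ℕ} {q : ℂ} (hq : q ≠ 0) (a : H n q) :
    a - algebraMap ℂ (H n q) (eps n q a) ∈ I n q (3 * n) := by
  induction a using H_induction with
  | h0 c => simp
  | hg g => rw [eps_gen, map_zero, sub_zero]; exact gen_mem_I (ord_lt g)
  | hadd a b ha hb =>
    rw [map_add, map_add, add_sub_add_comm]
    exact Submodule.add_mem _ ha hb
  | hmul a b ha hb =>
    have := Submodule.add_mem _ (I_mul hq b _ ha)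
      (Ideal.mul_mem_left _ (algebraMap ℂ (H n q) (eps n q a)) hb)
    rw [map_mul, map_mul]
    rwa [sub_mul, mul_sub, sub_add_sub_cancel] at this

/-- the augmentation as a module map -/
def epsL (n : ℕ) (q : ℂ) : H n q →ₗ[H n q] (trivMod n q) where
  toFun a := (eps n q a : ℂ)
  map_add' a b := map_add (eps n q) a b
  map_smul' a b := map_mul (eps n q) a b

/-- the augmentation on the quotients -/
def epsQ (n : ℕ) (q : ℂ) (k : ℕ) : Q n q k →ₗ[H n q] (trivMod n q) :=
  Submodule.liftQ (I n q k) (epsL n q) (fun _ ha => eps_I ha)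

lemma gen_smul_triv {n : ℕ} {q : ℂ} (g : GenIdx n) (c : ℂ) (t : trivMod n q) :
    (c • gen n q g) • t = 0 := by
  change (eps n q (c • gen n q g) : ℂ) * (id t : ℂ) = (0 : ℂ)
  rw [map_smul, eps_gen, smul_zero, zero_mul]

lemma epsQ_bij {n : ℕ} {q : ℂ} (hq : q ≠ 0) : Function.Bijective (epsQ n q (3 * n)) := by
  constructor
  · rw [injective_iff_map_eq_zero]
    intro a ha
    obtain ⟨a, rfl⟩ := Submodule.Quotient.mk_surjective _ a
    change eps n q a = (0 : ℂ) at ha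
    rw [Submodule.Quotient.mk_eq_zero]
    have := sub_eps_mem hq a
    rwa [ha, map_zero, sub_zero] at this
  · intro t
    refine ⟨Submodule.Quotient.mk (algebraMap ℂ (H n q) t), ?_⟩
    exact (eps n q).commutes t

/-- the augmentation as a morphism -/
def epsHom (n : ℕ) (q : ℂ) (k : ℕ) : MM n q k ⟶ trivMod n q :=
  @ModuleCat.ofHom (H n q) _ (Q n q k) (trivMod n q) _ _ _ _ (epsQ n q k)

/-- the last module of the chain is the trivial one -/
def isoT {n : ℕ} {q : ℂ} (hq : q ≠ 0) : MM n q (3 * n) ≅ trivMod n q :=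
  (LinearEquiv.ofBijective (epsQ n q (3 * n)) (epsQ_bij hq)).toModuleIso

lemma base_proj (n : ℕ) (q : ℂ) : Projective (MM n q 0) := by
  have e : Q n q 0 ≃ₗ[H n q] H n q := Submodule.quotEquivOfEqBot _ (I_zero n q)
  have : Module.Projective (H n q) (Q n q 0) := Module.Projective.of_equiv e.symm
  exact (IsProjective.iff_projective _).1 this

open Abelian in
lemma chain {n : ℕ} {q : ℂ} (hq : q ≠ 0) (k : ℕ) (hk : k ≤ 3 * n) :
    HasProjectiveDimensionLT (MM n q k) (k + 1) ∧ (∃ e : Ext (MM n q k) (trivMod n q) k, e ≠ 0) ∧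
    ∀ (c : ℂ) (g : GenIdx n) (e : Ext (MM n q k) (trivMod n q) k),
      (Ext.mk₀ (rho hq k (c • gen n q g))).comp e (zero_add k) = 0 := by
  induction k with
  | zero =>
    have := base_proj n q
    refine ⟨inferInstance, ⟨Ext.mk₀ (epsHom n q 0), ?_⟩, ?_⟩
    · intro h
      rw [Ext.mk₀_eq_zero_iff] at h
      have h1 := congrArg (fun f => f.hom (Submodule.Quotient.mk 1 : Q n q 0)) h
      change eps n q 1 = (0 : ℂ) at h1
      rw [map_one] at h1
      exact one_ne_zero h1
    · intro c g e
      obtain ⟨f, rfl⟩ := (Ext.mk₀_bijective _ _).2 e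
      rw [Ext.mk₀_comp_mk₀, Ext.mk₀_eq_zero_iff]
      apply ModuleCat.hom_ext
      apply LinearMap.ext
      intro a
      obtain ⟨a, rfl⟩ := Submodule.Quotient.mk_surjective _ a
      change f.hom (Submodule.Quotient.mk (a * (c • gen n q g)) : Q n q 0) = 0
      have : (Submodule.Quotient.mk (a * (c • gen n q g)) : Q n q 0) =
        a • ((c • gen n q g) • (Submodule.Quotient.mk 1 : Q n q 0)) := by
        rw [← Submodule.Quotient.mk_smul, ← Submodule.Quotient.mk_smul, smul_eq_mul, smul_eq_mul,
          mul_one]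
      rw [this]
      erw [map_smul, map_smul]
      rw [gen_smul_triv, smul_zero]
  | succ k ih =>
    obtain ⟨h1, h2, h3⟩ := ih (by omega)
    obtain ⟨g, rfl⟩ := ord_surj (n := n) k (by omega)
    have hρ := h3 1 g
    rw [one_smul] at hρ
    obtain ⟨h4, h5⟩ := cat_step (trivMod n q) (ord g) _ _ _ (rho_exact hq g) h1 h2 hρ
    refine ⟨h4, h5, fun c h e => ?_⟩
    obtain ⟨c', hc'⟩ := rho_theta hq g h c
    exact cat_kill (trivMod n q) (ord g) _ _ _ (rho_exact hq g) h1 _ _ _ hc'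
      (theta_ppi hq (ord g) _) (h3 c' h) e

/-- For `n ≥ 1` and `q ∈ ℂ` nonzero and not a root of unity, the trivial
module `ℂ_ε` has projective dimension exactly `3n`: it admits a projective resolution of
length `3n` but no projective resolution of length `3n - 1`. -/
theorem trivial_module_projective_dimension (n : ℕ) (hn : 1 ≤ n) (q : ℂ) (hq : q ≠ 0)
    (hq' : NotRootOfUnity q) :
    HasProjResLengthLE (trivMod n q) (3 * n) ∧
      ¬ HasProjResLengthLE (trivMod n q) (3 * n - 1) := by

  obtain ⟨h1, ⟨e, he⟩, -⟩ := chain hq (3 * n) le_rfl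
  constructor
  · apply res_of_pd
    exact hasProjectiveDimensionLT_of_iso (isoT hq) _
  · intro h
    have h0 := ext_zero_of_res h (trivMod n q) (3 * n) (by omega)
      ((Abelian.Ext.mk₀ (isoT hq).inv).comp e (zero_add _))
    apply he
    have h2 : (Abelian.Ext.mk₀ (isoT hq).hom).comp
        ((Abelian.Ext.mk₀ (isoT hq).inv).comp e (zero_add _)) (zero_add _) = e := by
      rw [Abelian.Ext.mk₀_comp_mk₀_assoc, Iso.hom_inv_id, Abelian.Ext.mk₀_id_comp]
    rw [← h2, h0, Abelian.Ext.comp_zero]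

end QHeisenberg
end
end
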